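/- arXiv:2311.05222 — 5 statements merged into one kernel-verified Lean document; each statement's English description precedes it below -/
import Mathlib

section
/- Let n ≥ 2, let F ∈ 𝔉_n, let λ, μ ∈ ℂ, let Y be a solution of Y' = (F + Λ(λ))Y on [0,1] and let Z be a solution of the star system Z' = (F* + (−1)ⁿΛ(μ))Z on [0,1]. Then for every x ∈ [0,1], ⟨Z,Y⟩(x) = ⟨Z,Y⟩(0) + (λ − μ)·∫₀ˣ Z₀(t)·Y₀(t) dt. (Lagrange identity, equation (wron).) -/
/-!
The identity is the integrated form of the pointwise identity
`⟨Z', Y⟩ + ⟨Z, Y'⟩ = (λ - μ) Z₀ Y₀`. In the left-hand side the contributions of `F` and `F*`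
cancel because `F*` is minus the adjoint of `F` for the bracket (`star_cancel`); the contribution
of `Λ(λ)` is the single term `λ Z₀ Y₀`, that of `(-1)ⁿ Λ(μ)` the single term
`(-1)ⁿ⁻¹ (-1)ⁿ μ Z₀ Y₀ = -μ Z₀ Y₀` (`bracket_deriv`).

Since the entries of `F` are merely integrable, `Y` and `Z` are only absolutely continuous, so the
product rule is needed in integrated form (`mul_eq_add_integral`). It follows from the
Lebesgue differentiation theorem together with the fact that an absolutely continuous function
whose derivative vanishes almost everywhere is constant.
-/

open MeasureTheory

/-- The matrix `Λ(λ)`: the `(n,1)` entry (0-based: `(n-1,0)`) equals `λ`, others `0`. -/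
def LambdaMat (n : ℕ) (lam : ℂ) : Matrix (Fin n) (Fin n) ℂ :=
  fun k j => if (k : ℕ) = n - 1 ∧ (j : ℕ) = 0 then lam else 0

/-- The class `𝔉_n`: integrable entries, `f_{k,k+1} = 1`, `f_{k,j} = 0` for `j > k+1`,
zero trace (1-based indices of the paper correspond to 0-based indices here). -/
def IsFrakF (n : ℕ) (F : ℝ → Matrix (Fin n) (Fin n) ℂ) : Prop :=
  (∀ k j : Fin n, IntegrableOn (fun x => F x k j) (Set.Icc (0:ℝ) 1)) ∧
  (∀ x : ℝ, ∀ k j : Fin n, (j : ℕ) = (k : ℕ) + 1 → F x k j = 1) ∧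
  (∀ x : ℝ, ∀ k j : Fin n, (j : ℕ) > (k : ℕ) + 1 → F x k j = 0) ∧
  (∀ x : ℝ, ∑ k : Fin n, F x k k = 0)

/-- The matrix `F*`: `f*_{k,j} = (-1)^{k+j+1} f_{n-j+1,n-k+1}` (1-based), i.e. 0-based
`f*_{a,b} = (-1)^{a+b+1} f_{n-1-b,n-1-a}`. -/
def FStar (n : ℕ) (F : ℝ → Matrix (Fin n) (Fin n) ℂ) : ℝ → Matrix (Fin n) (Fin n) ℂ :=
  fun x a b => (-1 : ℂ) ^ ((a : ℕ) + (b : ℕ) + 1) * F x b.rev a.rev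

/-- A solution of the system `Y' = (F + Λ(λ)) Y` on `[0,1]`, in integral form. -/
def IsSol (n : ℕ) (F : ℝ → Matrix (Fin n) (Fin n) ℂ) (lam : ℂ) (Y : ℝ → Fin n → ℂ) : Prop :=
  ContinuousOn Y (Set.Icc (0:ℝ) 1) ∧
  ∀ x ∈ Set.Icc (0:ℝ) 1, ∀ j : Fin n,
    Y x j = Y 0 j + ∫ t in (0:ℝ)..x, ((F t + LambdaMat n lam).mulVec (Y t)) j

/-- A solution of the star system `Z' = (F* + (-1)^n Λ(μ)) Z` on `[0,1]`. -/
def IsSolStar (n : ℕ) (F : ℝ → Matrix (Fin n) (Fin n) ℂ) (mu : ℂ) (Z : ℝ → Fin n → ℂ) : Prop :=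
  IsSol n (FStar n F) ((-1 : ℂ) ^ n * mu) Z

/-- The Lagrange bracket `⟨Z,Y⟩(x) = Σ_{j=0}^{n-1} (-1)^j Z_j(x) Y_{n-1-j}(x)`. -/
noncomputable def bracket (n : ℕ) (Z Y : ℝ → Fin n → ℂ) (x : ℝ) : ℂ :=
  ∑ j : Fin n, (-1 : ℂ) ^ (j : ℕ) * Z x j * Y x j.rev

/-- Complex-valued version of
`IntervalIntegrable.absolutelyContinuousOnInterval_intervalIntegral`: the increments of the
primitive of `f` are dominated by those of the primitive of `‖f‖`. -/
lemma absolutelyContinuous_primitive {f : ℝ → ℂ} {a b : ℝ}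
    (h : IntervalIntegrable f volume a b) :
    AbsolutelyContinuousOnInterval (fun x => ∫ t in a..x, f t) a b := by
  have hn := h.norm.absolutelyContinuousOnInterval_intervalIntegral (c := a) (by simp)
  rw [absolutelyContinuousOnInterval_iff] at hn ⊢
  intro ε hε
  obtain ⟨δ, hδ, H⟩ := hn ε hε
  refine ⟨δ, hδ, fun E hE hl => lt_of_le_of_lt (Finset.sum_le_sum fun i hi => ?_) (H E hE hl)⟩
  have hmem := hE.1 i hi
  have hint : ∀ c ∈ Set.uIcc a b, IntervalIntegrable f volume a c := fun c hc =>
    h.mono_set (Set.uIcc_subset_uIcc (by simp) hc)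
  rw [dist_comm, dist_comm (∫ t in a..(E.2 i).1, ‖f t‖), dist_eq_norm, dist_eq_norm,
    intervalIntegral.integral_interval_sub_left (hint _ hmem.2) (hint _ hmem.1),
    intervalIntegral.integral_interval_sub_left (hint _ hmem.2).norm (hint _ hmem.1).norm]
  exact intervalIntegral.norm_integral_le_abs_integral_norm

/-- Product rule for absolutely continuous functions, given as primitives of `u'` and `v'`. -/
lemma mul_eq_add_integral {u v u' v' : ℝ → ℂ} {a b : ℝ}
    (hu' : IntervalIntegrable u' volume a b) (hv' : IntervalIntegrable v' volume a b)
    (hu : ∀ x ∈ Set.uIcc a b, u x = u a + ∫ t in a..x, u' t)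
    (hv : ∀ x ∈ Set.uIcc a b, v x = v a + ∫ t in a..x, v' t)
    (hi : IntervalIntegrable (fun t => u' t * v t + u t * v' t) volume a b) :
    ∀ x ∈ Set.uIcc a b,
      u x * v x = u a * v a + ∫ t in a..x, (u' t * v t + u t * v' t) := by
  have hc : ∀ c : ℂ, AbsolutelyContinuousOnInterval (fun _ : ℝ => c) a b := fun c =>
    (LipschitzWith.const c).lipschitzOnWith.absolutelyContinuousOnInterval
  -- `u` and `v` are controlled on `[a, b]` only, so two-sided derivatives at the endpoints
  -- require replacing them by the globally defined primitives.
  have hac := (((hc (u a)).fun_add (absolutelyContinuous_primitive hu')).fun_smul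
    ((hc (v a)).fun_add (absolutelyContinuous_primitive hv'))).fun_sub (absolutelyContinuous_primitive hi)
  obtain ⟨C, hC⟩ := hac.const_of_ae_hasDerivAt_zero (by
    filter_upwards [hu'.ae_hasDerivAt_integral, hv'.ae_hasDerivAt_integral,
      hi.ae_hasDerivAt_integral] with x h1 h2 h3 hx
    have key := (((h1 hx a (by simp)).const_add (u a)).mul
      ((h2 hx a (by simp)).const_add (v a))).sub (h3 hx a (by simp))
    rw [← hu x hx, ← hv x hx, sub_self] at key
    exact key)
  intro x hx
  have e1 := hC x hx
  have e2 := hC a (by simp)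
  simp only [smul_eq_mul, intervalIntegral.integral_same, add_zero, sub_zero] at e1 e2
  rw [← hu x hx, ← hv x hx] at e1
  linear_combination e1 - e2

lemma intervalIntegrable_mulVec (n : ℕ) (F : ℝ → Matrix (Fin n) (Fin n) ℂ) (lam : ℂ)
    (hF : ∀ k j : Fin n, IntegrableOn (fun x => F x k j) (Set.Icc (0:ℝ) 1))
    (Y : ℝ → Fin n → ℂ) (hY : ContinuousOn Y (Set.Icc (0:ℝ) 1)) (k : Fin n) :
    IntervalIntegrable (fun t => ((F t + LambdaMat n lam).mulVec (Y t)) k) volume 0 1 := by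
  simp only [Matrix.mulVec, dotProduct, Matrix.add_apply]
  have h01 : Set.uIcc (0:ℝ) 1 = Set.Icc 0 1 := Set.uIcc_of_le zero_le_one
  have := IntervalIntegrable.sum (μ := volume) (a := 0) (b := 1) Finset.univ
    (f := fun (j : Fin n) (t : ℝ) => (F t k j + LambdaMat n lam k j) * Y t j) (fun j _ => by
      refine IntervalIntegrable.mul_continuousOn (IntervalIntegrable.add ?_ (by simp)) ?_
      · exact (intervalIntegrable_iff_integrableOn_Icc_of_le zero_le_one).2 (hF k j)
      · rw [h01]; exact (continuousOn_pi.1 hY) j)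
  rwa [Finset.sum_fn] at this

/-- `F*` is minus the adjoint of `F` with respect to the bracket. -/
lemma star_cancel (n : ℕ) (F : ℝ → Matrix (Fin n) (Fin n) ℂ) (t : ℝ) (y z : Fin n → ℂ) :
    ∑ j : Fin n, ((-1 : ℂ) ^ (j : ℕ) * ((FStar n F t).mulVec z) j * y j.rev
      + (-1 : ℂ) ^ (j : ℕ) * z j * ((F t).mulVec y) j.rev) = 0 := by
  rw [Finset.sum_add_distrib]
  have h1 : ∀ j : Fin n, ((F t).mulVec y) j.rev = ∑ k : Fin n, F t j.rev k.rev * y k.rev :=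
    fun j => (Equiv.sum_comp Fin.revPerm (fun k => F t j.rev k * y k)).symm
  simp only [h1]
  simp only [Matrix.mulVec, dotProduct, FStar, Finset.mul_sum, Finset.sum_mul]
  rw [Finset.sum_comm, ← Finset.sum_add_distrib]
  refine Finset.sum_eq_zero fun k _ => ?_
  rw [← Finset.sum_add_distrib]
  refine Finset.sum_eq_zero fun j _ => ?_
  have hs : (-1 : ℂ) ^ (j : ℕ) * (-1 : ℂ) ^ (j : ℕ) = 1 := by
    rw [← mul_pow]; simp
  rw [pow_add, pow_add]
  linear_combination (-(-1 : ℂ) ^ (k : ℕ) * F t k.rev j.rev * z k * y j.rev) * hs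

lemma lambdaMat_mulVec (n : ℕ) (hn : 0 < n) (lam : ℂ) (y : Fin n → ℂ) (k : Fin n) :
    ((LambdaMat n lam).mulVec y) k = if k = Fin.rev ⟨0, hn⟩ then lam * y ⟨0, hn⟩ else 0 := by
  have hk : k = Fin.rev ⟨0, hn⟩ ↔ (k : ℕ) = n - 1 := by simp [Fin.ext_iff]
  simp only [Matrix.mulVec, dotProduct, LambdaMat, hk]
  rw [Finset.sum_eq_single ⟨0, hn⟩]
  · by_cases h : (k : ℕ) = n - 1 <;> simp [h]
  · intro j _ hj
    rw [if_neg, zero_mul]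
    rintro ⟨-, h⟩
    exact hj (Fin.ext h)
  · simp

/-- The differentiated Lagrange identity. -/
lemma bracket_deriv (n : ℕ) (hn : 0 < n) (F : ℝ → Matrix (Fin n) (Fin n) ℂ) (lam mu : ℂ)
    (t : ℝ) (y z : Fin n → ℂ) :
    ∑ j : Fin n, (-1 : ℂ) ^ (j : ℕ) *
      (((FStar n F t + LambdaMat n ((-1 : ℂ) ^ n * mu)).mulVec z) j * y j.rev
      + z j * ((F t + LambdaMat n lam).mulVec y) j.rev)
      = (lam - mu) * (z ⟨0, hn⟩ * y ⟨0, hn⟩) := by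
  have hL : ∑ j : Fin n, (-1 : ℂ) ^ (j : ℕ) * (z j * ((LambdaMat n lam).mulVec y) j.rev)
      = lam * (z ⟨0, hn⟩ * y ⟨0, hn⟩) := by
    simp only [lambdaMat_mulVec n hn, Fin.rev_inj]
    rw [Finset.sum_eq_single ⟨0, hn⟩ (fun j _ hj => by simp [hj]) (by simp)]
    simp only [if_true, pow_zero]
    ring
  have hM : ∑ j : Fin n, (-1 : ℂ) ^ (j : ℕ) *
      (((LambdaMat n ((-1 : ℂ) ^ n * mu)).mulVec z) j * y j.rev)
      = -mu * (z ⟨0, hn⟩ * y ⟨0, hn⟩) := by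
    simp only [lambdaMat_mulVec n hn]
    rw [Finset.sum_eq_single (Fin.rev ⟨0, hn⟩) (fun j _ hj => by simp [hj]) (by simp)]
    obtain ⟨m, rfl⟩ : ∃ m, n = m + 1 := ⟨n - 1, by omega⟩
    have hs : (-1 : ℂ) ^ m * (-1 : ℂ) ^ m = 1 := by rw [← mul_pow]; simp
    simp only [if_true, Fin.rev_rev, Fin.val_rev, zero_add, Nat.add_sub_cancel, pow_succ]
    linear_combination (-mu * (z ⟨0, hn⟩ * y ⟨0, hn⟩)) * hs
  have h0 := star_cancel n F t y z
  refine Eq.trans ?_ ((congrArg₂ (· + ·) h0 (congrArg₂ (· + ·) hL hM)).trans (by ring))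
  simp only [← Finset.sum_add_distrib]
  refine Finset.sum_congr rfl fun j _ => ?_
  simp only [Matrix.add_mulVec, Pi.add_apply]
  ring

/-- Lagrange identity (wron): for a solution `Y` of the system with parameter `λ` and a
solution `Z` of the star system with parameter `μ`,
`⟨Z,Y⟩(x) = ⟨Z,Y⟩(0) + (λ-μ) ∫₀ˣ Z₀ Y₀ dt` on `[0,1]`. -/
theorem statement0 (n : ℕ) (hn : 2 ≤ n) (F : ℝ → Matrix (Fin n) (Fin n) ℂ)
    (hF : IsFrakF n F) (lam mu : ℂ) (Y Z : ℝ → Fin n → ℂ)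
    (hY : IsSol n F lam Y) (hZ : IsSolStar n F mu Z) :
    ∀ x ∈ Set.Icc (0:ℝ) 1,
      bracket n Z Y x = bracket n Z Y 0 +
        (lam - mu) * ∫ t in (0:ℝ)..x, Z t ⟨0, by omega⟩ * Y t ⟨0, by omega⟩ := by
  have h01 : Set.uIcc (0:ℝ) 1 = Set.Icc 0 1 := Set.uIcc_of_le zero_le_one
  have hFS : ∀ k j : Fin n, IntegrableOn (fun x => FStar n F x k j) (Set.Icc (0:ℝ) 1) :=
    fun k j => (hF.1 j.rev k.rev).const_mul _
  have hy := intervalIntegrable_mulVec n F lam hF.1 Y hY.1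
  have hz := intervalIntegrable_mulVec n (FStar n F) ((-1 : ℂ) ^ n * mu) hFS Z hZ.1
  have hYc := continuousOn_pi.1 hY.1
  have hZc := continuousOn_pi.1 hZ.1
  have hi := fun j : Fin n => ((hz j).mul_continuousOn (h01 ▸ hYc j.rev)).add
    ((hy j.rev).continuousOn_mul (h01 ▸ hZc j))
  intro x hx
  have hprod := fun j : Fin n => mul_eq_add_integral (hz j) (hy j.rev)
    (fun x hx => hZ.2 x (h01 ▸ hx) j) (fun x hx => hY.2 x (h01 ▸ hx) j.rev) (hi j) x (h01 ▸ hx)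
  have hsub : Set.uIcc 0 x ⊆ Set.uIcc (0:ℝ) 1 :=
    Set.uIcc_subset_uIcc (by simp) (h01 ▸ hx)
  simp only [bracket, mul_assoc, hprod, mul_add ((-1 : ℂ) ^ _), Finset.sum_add_distrib]
  congr 1
  simp only [← intervalIntegral.integral_const_mul]
  rw [← intervalIntegral.integral_finsetSum fun j _ => ((hi j).mono_set hsub).const_mul _]
  exact intervalIntegral.integral_congr fun t _ =>
    bracket_deriv n (by omega) F lam mu t (Y t) (Z t)
end

section
/- Let n ≥ 2, F ∈ 𝔉_n, 1 ≤ k ≤ n−1, and let λ ≠ μ be complex numbers. Let Y be a solution of Y' = (F + Λ(λ))Y on [0,1] with Y_j(0) = 0 for 0 ≤ j ≤ k−1 and Y_j(1) = 0 for 0 ≤ j ≤ n−k−1 (an eigenfunction of problem L_k at λ), and let Z be a solution of the star system Z' = (F* + (−1)ⁿΛ(μ))Z on [0,1] with Z_j(0) = 0 for 0 ≤ j ≤ n−k−1 and Z_j(1) = 0 for 0 ≤ j ≤ k−1 (an eigenfunction of problem L*_{n−k} at μ). Then ∫₀¹ Z₀(t)·Y₀(t) dt = 0 (biorthogonality of eigenfunctions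 corresponding to distinct spectral parameters). -/
/-!
The proof is Lagrange's identity for the bracket `⟨Z,Y⟩ = ∑ j, (-1)^j Z_j Y_{n-1-j}`. The matrix `F*`
is defined so that, in the derivative of the bracket, the contributions of `F` and `F*` cancel, and
only the two corner entries survive: `⟨Z,Y⟩' = (λ - μ) Z₀ Y₀` (`lagrange_pointwise`).
Integrating over `[0,1]` gives `(λ - μ) ∫ Z₀ Y₀ = ⟨Z,Y⟩(1) - ⟨Z,Y⟩(0)`. The boundary conditions
make one factor of each summand of the bracket vanish at both endpoints, so the right side is `0`.

As the coefficients are merely integrable, the product rule has to be used for absolutely continuous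
functions. Mathlib states integration by parts in this setting for real functions only; the
complex version `integral_mul_add_mul_of_primitive` follows from the Lebesgue differentiation
theorem and the fact that an absolutely continuous function with a.e. zero derivative is constant.
-/

open MeasureTheory

/-! ### Integration by parts for complex primitives -/

lemma absCont_complex_integral {f : ℝ → ℂ} {a b : ℝ} (hf : IntervalIntegrable f volume a b) :
    AbsolutelyContinuousOnInterval (fun x => ∫ t in a..x, f t) a b := by
  have hre : IntervalIntegrable (fun t => (f t).re) volume a b := ⟨hf.1.re, hf.2.re⟩
  have him : IntervalIntegrable (fun t => (f t).im) volume a b := ⟨hf.1.im, hf.2.im⟩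
  have hc (c : ℂ) : AbsolutelyContinuousOnInterval (fun _ : ℝ => c) a b :=
    (LipschitzWith.const c).lipschitzOnWith.absolutelyContinuousOnInterval
  have h1 := (hre.absolutelyContinuousOnInterval_intervalIntegral
    (Set.left_mem_uIcc (a := a) (b := b))).smul (hc 1)
  have h2 := (him.absolutelyContinuousOnInterval_intervalIntegral
    (Set.left_mem_uIcc (a := a) (b := b))).smul (hc Complex.I)
  have h := h1.add h2
  -- The decomposition into real and imaginary parts is only valid on `[a, b]`, so absolute
  -- continuity is transferred along an equality on that interval.
  have key : Set.EqOn ((fun x => ∫ t in a..x, (f t).re) • (fun _ : ℝ => (1 : ℂ))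
      + (fun x => ∫ t in a..x, (f t).im) • (fun _ : ℝ => Complex.I))
      (fun x => ∫ t in a..x, f t) (Set.uIcc a b) := by
    intro x hx
    have hfx : IntervalIntegrable f volume a x :=
      hf.mono_set (Set.uIcc_subset_uIcc_left hx)
    have e1 := Complex.reCLM.intervalIntegral_comp_comm hfx
    have e2 := Complex.imCLM.intervalIntegral_comp_comm hfx
    simp only [Complex.reCLM_apply, Complex.imCLM_apply] at e1 e2
    apply Complex.ext <;> simp [e1, e2]
  rw [absolutelyContinuousOnInterval_iff] at h ⊢
  intro ε hε
  obtain ⟨δ, hδ, H⟩ := h ε hε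
  refine ⟨δ, hδ, fun E hE hlt => ?_⟩
  have := H E hE hlt
  refine lt_of_eq_of_lt (Finset.sum_congr rfl fun i hi => ?_) this
  rw [key (hE.1 i hi).1, key (hE.1 i hi).2]

/-- Product rule in integrated form: `u` and `v` are primitives on `[0,1]` of integrable
functions `f` and `g`. -/
lemma integral_mul_add_mul_of_primitive {f g u v : ℝ → ℂ}
    (hf : IntervalIntegrable f volume 0 1) (hg : IntervalIntegrable g volume 0 1)
    (hu : ∀ x ∈ Set.Icc (0:ℝ) 1, u x = u 0 + ∫ t in (0:ℝ)..x, f t)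
    (hv : ∀ x ∈ Set.Icc (0:ℝ) 1, v x = v 0 + ∫ t in (0:ℝ)..x, g t) :
    IntervalIntegrable (fun t => f t * v t + u t * g t) volume 0 1 ∧
    ∫ t in (0:ℝ)..1, (f t * v t + u t * g t) = u 1 * v 1 - u 0 * v 0 := by
  have hI : Set.uIcc (0:ℝ) 1 = Set.Icc 0 1 := Set.uIcc_of_le zero_le_one
  -- `U` and `V` extend `u` and `v` from `[0,1]` by the same formula to all of `ℝ`, so that
  -- two-sided derivatives make sense.
  set U : ℝ → ℂ := (fun _ => u 0) + fun x => ∫ t in (0:ℝ)..x, f t with hU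
  set V : ℝ → ℂ := (fun _ => v 0) + fun x => ∫ t in (0:ℝ)..x, g t with hV
  have hc (c : ℂ) : AbsolutelyContinuousOnInterval (fun _ : ℝ => c) 0 1 :=
    (LipschitzWith.const c).lipschitzOnWith.absolutelyContinuousOnInterval
  have hUac : AbsolutelyContinuousOnInterval U 0 1 := (hc _).add (absCont_complex_integral hf)
  have hVac : AbsolutelyContinuousOnInterval V 0 1 := (hc _).add (absCont_complex_integral hg)
  have huU : ∀ x ∈ Set.Icc (0:ℝ) 1, u x = U x := hu
  have hvV : ∀ x ∈ Set.Icc (0:ℝ) 1, v x = V x := hv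
  have hw : IntervalIntegrable (fun t => f t * V t + U t * g t) volume 0 1 :=
    (hf.mul_continuousOn hVac.continuousOn).add (hg.continuousOn_mul hUac.continuousOn)
  have hEq : Set.EqOn (fun t => f t * V t + U t * g t) (fun t => f t * v t + u t * g t)
      (Set.uIcc (0:ℝ) 1) := by
    intro t ht
    rw [hI] at ht
    simp only [huU t ht, hvV t ht]
  have hHac := (hUac.smul hVac).sub (absCont_complex_integral hw)
  obtain ⟨C, hC⟩ := hHac.const_of_ae_hasDerivAt_zero (by
    filter_upwards [hf.ae_hasDerivAt_integral, hg.ae_hasDerivAt_integral,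
      hw.ae_hasDerivAt_integral] with x h1 h2 h3 hx
    have d1 : HasDerivAt U (f x) x := (h1 hx 0 Set.left_mem_uIcc).const_add (u 0)
    have d2 : HasDerivAt V (g x) x := (h2 hx 0 Set.left_mem_uIcc).const_add (v 0)
    have d := (d1.mul d2).sub (h3 hx 0 Set.left_mem_uIcc)
    rw [sub_self] at d
    exact d)
  have c0 := hC 0 Set.left_mem_uIcc
  have c1 := hC 1 Set.right_mem_uIcc
  simp only [Pi.sub_apply, smul_eq_mul, Pi.mul_apply, intervalIntegral.integral_same,
    sub_zero] at c0 c1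
  refine ⟨hw.congr (fun t ht => hEq (Set.uIoc_subset_uIcc ht)), ?_⟩
  rw [← intervalIntegral.integral_congr hEq, huU 1 (by simp), hvV 1 (by simp),
    huU 0 (by simp), hvV 0 (by simp)]
  linear_combination c0 - c1

/-! ### Lagrange's identity -/

lemma intervalIntegrable_rhs {n : ℕ} {G : ℝ → Matrix (Fin n) (Fin n) ℂ}
    (hG : ∀ k j : Fin n, IntegrableOn (fun x => G x k j) (Set.Icc (0:ℝ) 1)) (lam : ℂ)
    {Y : ℝ → Fin n → ℂ} (hY : ContinuousOn Y (Set.Icc (0:ℝ) 1)) (j : Fin n) :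
    IntervalIntegrable (fun t => ((G t + LambdaMat n lam).mulVec (Y t)) j) volume 0 1 := by
  have hI : Set.uIcc (0:ℝ) 1 = Set.Icc 0 1 := Set.uIcc_of_le zero_le_one
  simp only [Matrix.mulVec, dotProduct, Matrix.add_apply]
  have := IntervalIntegrable.sum (μ := volume) (a := (0:ℝ)) (b := 1) Finset.univ
    (f := fun (i : Fin n) t => (G t j i + LambdaMat n lam j i) * Y t i) (fun i _ => by
      refine IntervalIntegrable.mul_continuousOn (IntervalIntegrable.add ?_ (by simp)) ?_
      · rw [intervalIntegrable_iff_integrableOn_Icc_of_le zero_le_one]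
        exact hG j i
      · rw [hI]
        exact (continuous_apply i).comp_continuousOn hY)
  refine this.congr fun t _ => ?_
  simp

lemma LambdaMat_mulVec {n : ℕ} (hn : 0 < n) (lam : ℂ) (y : Fin n → ℂ) (j : Fin n) :
    (LambdaMat n lam).mulVec y j = if j = (⟨0, hn⟩ : Fin n).rev then lam * y ⟨0, hn⟩ else 0 := by
  have h : ((j : ℕ) = n - 1) ↔ j = (⟨0, hn⟩ : Fin n).rev := by
    rw [Fin.ext_iff, Fin.val_rev]
  simp only [Matrix.mulVec, dotProduct, LambdaMat]
  rw [Finset.sum_eq_single ⟨0, hn⟩]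
  · simp [h]
  · intro b _ hb
    have : (b : ℕ) ≠ 0 := fun h0 => hb (Fin.ext h0)
    simp [this]
  · simp

/-- The cancellation behind the definition of `F*`: it is minus the adjoint of `F` with respect
to the bilinear form `∑ j, (-1)^j z_j y_{n-1-j}`. -/
lemma FStar_adjoint {n : ℕ} (F : ℝ → Matrix (Fin n) (Fin n) ℂ) (t : ℝ) (y z : Fin n → ℂ) :
    ∑ j : Fin n, (-1 : ℂ) ^ (j : ℕ) * ((FStar n F t).mulVec z j * y j.rev
      + z j * (F t).mulVec y j.rev) = 0 := by
  simp only [mul_add, Finset.sum_add_distrib, Matrix.mulVec, dotProduct, Finset.sum_mul,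
    Finset.mul_sum]
  rw [Finset.sum_comm, ← Finset.sum_add_distrib]
  refine Finset.sum_eq_zero fun b _ => ?_
  rw [← Equiv.sum_comp Fin.revPerm (fun i => (-1 : ℂ) ^ (b : ℕ) * (z b * (F t b.rev i * y i))),
    ← Finset.sum_add_distrib]
  refine Finset.sum_eq_zero fun j _ => ?_
  have h : (-1 : ℂ) ^ (j : ℕ) * (-1) ^ (j : ℕ) = 1 := by
    rw [← mul_pow]; simp
  simp only [FStar, Fin.revPerm_apply, pow_add, pow_one]
  linear_combination (-(-1 : ℂ) ^ (b : ℕ) * F t b.rev j.rev * z b * y j.rev) * h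

/-- The derivative of the Lagrange bracket, with `Y'` and `Z'` replaced by the right-hand sides of
their equations, is `(λ - μ) Z₀ Y₀`. -/
lemma lagrange_pointwise {n : ℕ} (hn : 0 < n) (F : ℝ → Matrix (Fin n) (Fin n) ℂ) (lam mu : ℂ)
    (t : ℝ) (y z : Fin n → ℂ) :
    ∑ j : Fin n, (-1 : ℂ) ^ (j : ℕ) *
      ((FStar n F t + LambdaMat n ((-1) ^ n * mu)).mulVec z j * y j.rev
        + z j * (F t + LambdaMat n lam).mulVec y j.rev)
      = (lam - mu) * (z ⟨0, hn⟩ * y ⟨0, hn⟩) := by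
  have hsplit : ∀ j : Fin n, (-1 : ℂ) ^ (j : ℕ) *
      ((FStar n F t + LambdaMat n ((-1) ^ n * mu)).mulVec z j * y j.rev
        + z j * (F t + LambdaMat n lam).mulVec y j.rev)
      = (-1 : ℂ) ^ (j : ℕ) * ((FStar n F t).mulVec z j * y j.rev
          + z j * (F t).mulVec y j.rev)
        + (if j = (⟨0, hn⟩ : Fin n).rev then
            (-1 : ℂ) ^ (j : ℕ) * ((-1) ^ n * mu * z ⟨0, hn⟩ * y j.rev) else 0)
        + (if j = ⟨0, hn⟩ then (-1 : ℂ) ^ (j : ℕ) * (z j * (lam * y ⟨0, hn⟩)) else 0) := by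
    intro j
    simp only [Matrix.add_mulVec, Pi.add_apply, LambdaMat_mulVec hn, Fin.rev_inj]
    split_ifs <;> ring
  rw [Finset.sum_congr rfl fun j _ => hsplit j, Finset.sum_add_distrib, Finset.sum_add_distrib,
    FStar_adjoint, Finset.sum_ite_eq' Finset.univ, Finset.sum_ite_eq' Finset.univ]
  -- The sign of the `μ` term: the corner row has index `n - 1`, and `(-1)^(n-1) (-1)^n = -1`.
  obtain ⟨m, rfl⟩ : ∃ m, n = m + 1 := ⟨n - 1, by omega⟩
  have h : (-1 : ℂ) ^ m * (-1) ^ m = 1 := by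
    rw [← mul_pow]; simp
  simp only [Finset.mem_univ, if_true, Fin.rev_rev, Fin.val_rev, pow_succ, pow_zero, zero_add,
    Nat.add_sub_cancel]
  linear_combination (-mu * z ⟨0, hn⟩ * y ⟨0, hn⟩) * h

/-- Lagrange's identity, integrated over `[0,1]`. -/
lemma lagrange_integral {n : ℕ} (hn : 0 < n) {F : ℝ → Matrix (Fin n) (Fin n) ℂ}
    (hF : ∀ k j : Fin n, IntegrableOn (fun x => F x k j) (Set.Icc (0:ℝ) 1)) {lam mu : ℂ}
    {Y Z : ℝ → Fin n → ℂ} (hY : IsSol n F lam Y) (hZ : IsSolStar n F mu Z) :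
    (lam - mu) * ∫ t in (0:ℝ)..1, Z t ⟨0, hn⟩ * Y t ⟨0, hn⟩
      = bracket n Z Y 1 - bracket n Z Y 0 := by
  have hFs : ∀ k j : Fin n, IntegrableOn (fun x => FStar n F x k j) (Set.Icc (0:ℝ) 1) :=
    fun k j => (hF j.rev k.rev).const_mul _
  have key := fun j : Fin n => integral_mul_add_mul_of_primitive
    (u := fun t => Z t j) (v := fun t => Y t j.rev)
    (intervalIntegrable_rhs hFs _ hZ.1 j) (intervalIntegrable_rhs hF lam hY.1 j.rev)
    (fun x hx => hZ.2 x hx j) (fun x hx => hY.2 x hx j.rev)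
  rw [← intervalIntegral.integral_const_mul]
  simp_rw [← fun t => lagrange_pointwise hn F lam mu t (Y t) (Z t)]
  rw [intervalIntegral.integral_finsetSum fun j _ => (key j).1.const_mul _]
  simp only [intervalIntegral.integral_const_mul, (key _).2, bracket]
  rw [← Finset.sum_sub_distrib]
  exact Finset.sum_congr rfl fun j _ => by ring

/-- Biorthogonality: if `Y` is an eigenfunction of the problem `L_k` at `λ` and `Z` an
eigenfunction of the star problem `L*_{n-k}` at `μ`, with `λ ≠ μ`, then
`∫₀¹ Z₀(t) Y₀(t) dt = 0`. -/
theorem statement2 (n : ℕ) (hn : 2 ≤ n) (F : ℝ → Matrix (Fin n) (Fin n) ℂ)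
    (hF : IsFrakF n F) (k : ℕ) (hk1 : 1 ≤ k) (hkn : k ≤ n - 1)
    (lam mu : ℂ) (hlm : lam ≠ mu) (Y Z : ℝ → Fin n → ℂ)
    (hY : IsSol n F lam Y)
    (hY0 : ∀ j : Fin n, (j : ℕ) < k → Y 0 j = 0)
    (hY1 : ∀ j : Fin n, (j : ℕ) < n - k → Y 1 j = 0)
    (hZ : IsSolStar n F mu Z)
    (hZ0 : ∀ j : Fin n, (j : ℕ) < n - k → Z 0 j = 0)
    (hZ1 : ∀ j : Fin n, (j : ℕ) < k → Z 1 j = 0) :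
    ∫ t in (0:ℝ)..1, Z t ⟨0, by omega⟩ * Y t ⟨0, by omega⟩ = 0 := by
  have h := lagrange_integral (by omega) hF.1 hY hZ
  have b0 : bracket n Z Y 0 = 0 := Finset.sum_eq_zero fun j _ => by
    by_cases hj : (j : ℕ) < n - k
    · simp [hZ0 j hj]
    · have : (j.rev : ℕ) < k := by rw [Fin.val_rev]; omega
      simp [hY0 _ this]
  have b1 : bracket n Z Y 1 = 0 := Finset.sum_eq_zero fun j _ => by
    by_cases hj : (j : ℕ) < k
    · simp [hZ1 j hj]
    · have : (j.rev : ℕ) < n - k := by rw [Fin.val_rev]; omega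
      simp [hY1 _ this]
  rw [b0, b1, sub_zero] at h
  exact (mul_eq_zero.mp h).resolve_left (sub_ne_zero.mpr hlm)
end

section
/- Let n = 2p with p ≥ 1, let F ∈ 𝔉_n^+, let λ₀ ∈ ℝ and β ∈ ℂ. Suppose φ is a solution of Y' = (F + Λ(λ₀))Y on [0,1] satisfying φ_j(0) = δ_{j,p} for 0 ≤ j ≤ p and φ_j(1) = 0 for 0 ≤ j ≤ p−1 (so φ is the eigenfunction Φ_{p+1}(·,λ₀) of problem L_p). Suppose further that there are complex numbers λ_m (m ∈ ℕ) and, for each m, a solution Ψ_m of Y' = (F + Λ(λ_m))Y on [0,1] with Ψ_{m,j}(0) = δ_{j,p−1} for 0 ≤ j ≤ p−1 and Ψ_{m,j}(1) = 0 for 0 ≤ j ≤ p−1, such that the functions (λ_m − λ₀)·Ψ_{m,0} converge uniformly on [0,1] to β·φ₀ as m → ∞. Then β·∫₀¹ |φ₀(x)|² dx = (−1)^{p+1}; in particular β is real and (−1)^{p+1}·β > 0. (Concrete form of Lemma 3.1: positivity of the middle weight numbers in the self-adjoint even-order case.) -/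
/-!
For real `λ₀`, the symmetry of `F` makes `conj φ` a solution of the adjoint system, so the
derivative of the Lagrange bracket of `conj φ` with `Ψ_m` is `(λ_m - λ₀) conj φ₀ Ψ_{m,0}`
(`lagrange_pointwise`, integrated in `lagrange`). The entries of `F` are only integrable, so the
integration rests on integration by parts for absolutely continuous complex functions
(`integral_parts`). The boundary conditions make the bracket vanish at `1` and equal `(-1)^p` at
`0`, whence `∫₀¹ conj φ₀ · (λ_m - λ₀) Ψ_{m,0} = (-1)^(p+1)` for every `m`. Uniform convergence
allows passing to the limit, which gives `β ∫₀¹ |φ₀|² = (-1)^(p+1)`; the integral is then nonzero,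
hence positive, and `β` is real with the sign of `(-1)^(p+1)`.
-/


open MeasureTheory

/-- The self-adjoint class `𝔉_n⁺`:
`f_{k,j}(x) = (-1)^{k+j+1} conj(f_{n-j+1,n-k+1}(x))` for a.e. `x ∈ [0,1]`. -/
def IsFrakFPlus (n : ℕ) (F : ℝ → Matrix (Fin n) (Fin n) ℂ) : Prop :=
  IsFrakF n F ∧
  ∀ᵐ x ∂(volume.restrict (Set.Icc (0:ℝ) 1)), ∀ a b : Fin n,
    F x a b = (-1 : ℂ) ^ ((a : ℕ) + (b : ℕ) + 1) * (starRingEnd ℂ) (F x b.rev a.rev)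

/-! ### Integration by parts for primitives of integrable complex functions -/

/-- The primitive of an integrable complex function is absolutely continuous; Mathlib has the real
case, which is applied to the real and imaginary parts. -/
theorem absolutelyContinuous_integral {u : ℝ → ℂ} (hu : IntervalIntegrable u volume 0 1) :
    AbsolutelyContinuousOnInterval (fun x => ∫ t in (0:ℝ)..x, u t) 0 1 := by
  have hre : IntervalIntegrable (fun t => (u t).re) volume 0 1 := ⟨hu.1.re, hu.2.re⟩
  have him : IntervalIntegrable (fun t => (u t).im) volume 0 1 := ⟨hu.1.im, hu.2.im⟩
  have hconst : ∀ c : ℂ, AbsolutelyContinuousOnInterval (fun _ : ℝ => c) 0 1 := fun c =>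
    (contDiff_const (𝕜 := ℝ)).contDiffOn.absolutelyContinuousOnInterval
  have h1 := (hre.absolutelyContinuousOnInterval_intervalIntegral (c := 0) (by simp)).fun_smul
    (hconst 1)
  have h2 := (him.absolutelyContinuousOnInterval_intervalIntegral (c := 0) (by simp)).fun_smul
    (hconst Complex.I)
  have hsum := h1.fun_add h2
  have heq : ∀ x ∈ Set.uIcc (0:ℝ) 1, (∫ t in (0:ℝ)..x, u t) =
      (∫ t in (0:ℝ)..x, (u t).re) • (1 : ℂ) + (∫ t in (0:ℝ)..x, (u t).im) • Complex.I := by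
    intro x hx
    have hsub : Set.uIcc 0 x ⊆ Set.uIcc (0:ℝ) 1 := Set.uIcc_subset_uIcc (by simp) hx
    rw [← intervalIntegral.integral_smul_const, ← intervalIntegral.integral_smul_const,
      ← intervalIntegral.integral_add]
    · congr 1
      ext t
      simp [Complex.re_add_im]
    · exact ⟨(hre.mono_set hsub).1.smul_const _, (hre.mono_set hsub).2.smul_const _⟩
    · exact ⟨(him.mono_set hsub).1.smul_const _, (him.mono_set hsub).2.smul_const _⟩
  rw [absolutelyContinuousOnInterval_iff] at hsum ⊢
  intro ε hε
  obtain ⟨δ, hδ, H⟩ := hsum ε hε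
  refine ⟨δ, hδ, fun E hE hE' => ?_⟩
  convert H E hE hE' using 1
  refine Finset.sum_congr rfl fun i hi => ?_
  have hm := hE.1 i hi
  rw [heq _ hm.1, heq _ hm.2]

/-- Integration by parts for complex functions which are given, on `[0,1]`, as primitives of
integrable functions. -/
theorem integral_parts {f g f' g' : ℝ → ℂ} (hf' : IntervalIntegrable f' volume 0 1)
    (hg' : IntervalIntegrable g' volume 0 1)
    (hf : ∀ x ∈ Set.Icc (0:ℝ) 1, f x = f 0 + ∫ t in (0:ℝ)..x, f' t)
    (hg : ∀ x ∈ Set.Icc (0:ℝ) 1, g x = g 0 + ∫ t in (0:ℝ)..x, g' t) :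
    IntervalIntegrable (fun x => f' x * g x + f x * g' x) volume 0 1 ∧
    ∫ x in (0:ℝ)..1, (f' x * g x + f x * g' x) = f 1 * g 1 - f 0 * g 0 := by
  have hconst : ∀ c : ℂ, AbsolutelyContinuousOnInterval (fun _ : ℝ => c) 0 1 := fun c =>
    (contDiff_const (𝕜 := ℝ)).contDiffOn.absolutelyContinuousOnInterval
  set U : ℝ → ℂ := fun x => f 0 + ∫ t in (0:ℝ)..x, f' t with hU
  set V : ℝ → ℂ := fun x => g 0 + ∫ t in (0:ℝ)..x, g' t with hV
  have hUac : AbsolutelyContinuousOnInterval U 0 1 :=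
    (hconst (f 0)).fun_add (absolutelyContinuous_integral hf')
  have hVac : AbsolutelyContinuousOnInterval V 0 1 :=
    (hconst (g 0)).fun_add (absolutelyContinuous_integral hg')
  have hint : IntervalIntegrable (fun x => f' x * V x + U x * g' x) volume 0 1 :=
    (hf'.mul_continuousOn hVac.continuousOn).add (hg'.continuousOn_mul hUac.continuousOn)
  -- `U * V` minus the primitive of `f' V + U g'` has zero derivative a.e., hence is constant.
  have hW : AbsolutelyContinuousOnInterval
      (fun x => U x * V x - ∫ t in (0:ℝ)..x, (f' t * V t + U t * g' t)) 0 1 :=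
    (hUac.fun_smul hVac).fun_sub (absolutelyContinuous_integral hint)
  have hd : ∀ᵐ x : ℝ, x ∈ Set.uIcc (0:ℝ) 1 → HasDerivAt
      (fun x => U x * V x - ∫ t in (0:ℝ)..x, (f' t * V t + U t * g' t)) 0 x := by
    filter_upwards [hf'.ae_hasDerivAt_integral, hg'.ae_hasDerivAt_integral,
      hint.ae_hasDerivAt_integral] with x h1 h2 h3 hx
    have k1 : HasDerivAt U (f' x) x := (h1 hx 0 (by simp)).const_add (f 0)
    have k2 : HasDerivAt V (g' x) x := (h2 hx 0 (by simp)).const_add (g 0)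
    have k3 := (k1.fun_mul k2).fun_sub (h3 hx 0 (by simp))
    rwa [sub_self] at k3
  obtain ⟨C, hC⟩ := hW.const_of_ae_hasDerivAt_zero hd
  have h0 := hC 0 (by simp)
  have h1 := hC 1 (by simp)
  have hI : Set.EqOn (fun x => f' x * V x + U x * g' x) (fun x => f' x * g x + f x * g' x)
      (Set.uIcc 0 1) := by
    intro x hx
    rw [Set.uIcc_of_le zero_le_one] at hx
    simp only [hU, hV, ← hf x hx, ← hg x hx]
  have hI' := intervalIntegral.integral_congr (μ := volume) hI
  refine ⟨hint.congr fun x hx => hI (Set.uIoc_subset_uIcc hx), ?_⟩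
  have e0 : U 0 = f 0 ∧ V 0 = g 0 := by simp [hU, hV]
  have e1 : U 1 = f 1 ∧ V 1 = g 1 :=
    ⟨(hf 1 (by simp)).symm, (hg 1 (by simp)).symm⟩
  simp only [intervalIntegral.integral_same, e0.1, e0.2] at h0
  simp only [e1.1, e1.2] at h1
  rw [← hI']
  linear_combination h0 - h1

/-! ### The Lagrange identity -/

theorem lambdaMat_mulVec_s3 {n : ℕ} (z : Fin n) (hz : (z : ℕ) = 0) (l : ℂ) (v : Fin n → ℂ)
    (j : Fin n) : (LambdaMat n l).mulVec v j = if j = z.rev then l * v z else 0 := by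
  have hj : (j : ℕ) = n - 1 ↔ j = z.rev := by
    rw [Fin.ext_iff, Fin.val_rev, hz]
  simp only [Matrix.mulVec, dotProduct, LambdaMat, hj]
  rw [Finset.sum_eq_single z]
  · simp [hz]
  · intro b _ hb
    have : (b : ℕ) ≠ 0 := fun h => hb (Fin.ext (h.trans hz.symm))
    simp [this]
  · simp

/-- The pointwise Lagrange identity: the symmetry of `M` makes all the terms containing `M`
cancel in pairs, so that only the spectral terms survive. -/
theorem lagrange_pointwise_s3 {n : ℕ} (hn : Even n) (z : Fin n) (hz : (z : ℕ) = 0)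
    (M : Matrix (Fin n) (Fin n) ℂ)
    (hM : ∀ a b : Fin n, M a b = (-1 : ℂ) ^ ((a : ℕ) + (b : ℕ) + 1) *
      (starRingEnd ℂ) (M b.rev a.rev))
    (l₀ : ℝ) (l : ℂ) (u v : Fin n → ℂ) :
    ∑ j : Fin n, (-1 : ℂ) ^ (j : ℕ) *
      ((starRingEnd ℂ) (((M + LambdaMat n l₀).mulVec u) j) * v j.rev
        + (starRingEnd ℂ) (u j) * ((M + LambdaMat n l).mulVec v) j.rev)
      = (l - l₀) * ((starRingEnd ℂ) (u z) * v z) := by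
  have hrev : ∀ a : Fin n, (-1 : ℂ) ^ ((a.rev : Fin n) : ℕ) = -(-1) ^ (a : ℕ) := by
    intro a
    have h : (-1 : ℂ) ^ (((a.rev : Fin n) : ℕ) + a + 1) = 1 := by
      rw [show ((a.rev : Fin n) : ℕ) + a + 1 = n by rw [Fin.val_rev]; omega]
      exact hn.neg_one_pow
    have h2 : (-1 : ℂ) ^ (a : ℕ) * (-1) ^ (a : ℕ) = 1 := by
      rw [← mul_pow]; simp
    rw [pow_succ, pow_add] at h
    linear_combination (-(-1) ^ (a : ℕ)) * h - (-1) ^ ((a.rev : Fin n) : ℕ) * h2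
  have hL : ∑ j : Fin n, (-1 : ℂ) ^ (j : ℕ) *
      ((starRingEnd ℂ) ((LambdaMat n l₀).mulVec u j) * v j.rev
        + (starRingEnd ℂ) (u j) * (LambdaMat n l).mulVec v j.rev)
      = (l - l₀) * ((starRingEnd ℂ) (u z) * v z) := by
    simp only [lambdaMat_mulVec_s3 z hz, Fin.rev_inj, mul_add, Finset.sum_add_distrib]
    rw [Finset.sum_eq_single z.rev (by simp +contextual) (by simp),
      Finset.sum_eq_single z (by simp +contextual) (by simp), hrev, hz]
    simp only [if_true, Fin.rev_rev, map_mul, Complex.conj_ofReal]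
    ring
  have hcancel : ∑ j : Fin n, (-1 : ℂ) ^ (j : ℕ) *
      ((starRingEnd ℂ) (M.mulVec u j) * v j.rev + (starRingEnd ℂ) (u j) * M.mulVec v j.rev)
      = 0 := by
    have hA : ∑ j : Fin n, (-1 : ℂ) ^ (j : ℕ) * ((starRingEnd ℂ) (M.mulVec u j) * v j.rev)
        = ∑ b : Fin n, ∑ a : Fin n, -((-1 : ℂ) ^ (b : ℕ) *
          ((starRingEnd ℂ) (M b.rev a) * (starRingEnd ℂ) (u a) * v b)) := by
      rw [← Equiv.sum_comp Fin.revPerm]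
      refine Finset.sum_congr rfl fun b _ => ?_
      simp only [Fin.revPerm_apply, Fin.rev_rev, hrev, Matrix.mulVec, dotProduct, map_sum, map_mul,
        Finset.sum_mul, Finset.mul_sum]
      refine Finset.sum_congr rfl fun a _ => ?_
      ring
    have hB : ∑ j : Fin n, (-1 : ℂ) ^ (j : ℕ) * ((starRingEnd ℂ) (u j) * M.mulVec v j.rev)
        = ∑ b : Fin n, ∑ a : Fin n, (-1 : ℂ) ^ (b : ℕ) *
          ((starRingEnd ℂ) (M b.rev a) * (starRingEnd ℂ) (u a) * v b) := by
      rw [Finset.sum_comm]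
      refine Finset.sum_congr rfl fun a _ => ?_
      simp only [Matrix.mulVec, dotProduct, Finset.mul_sum]
      refine Finset.sum_congr rfl fun b _ => ?_
      have h2 : (-1 : ℂ) ^ (a : ℕ) * (-1) ^ (a : ℕ) = 1 := by
        rw [← mul_pow]; simp
      rw [hM a.rev b, Fin.rev_rev, pow_succ, pow_add, hrev]
      linear_combination ((-1) ^ (b : ℕ) *
          ((starRingEnd ℂ) (M b.rev a) * (starRingEnd ℂ) (u a) * v b)) * h2
    simp only [mul_add, Finset.sum_add_distrib]
    rw [hA, hB, ← Finset.sum_add_distrib]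
    refine Finset.sum_eq_zero fun b _ => ?_
    rw [← Finset.sum_add_distrib]
    exact Finset.sum_eq_zero fun a _ => by ring
  rw [← hL, ← sub_eq_zero, ← Finset.sum_sub_distrib]
  refine Eq.trans (Finset.sum_congr rfl fun j _ => ?_) hcancel
  simp only [Matrix.add_mulVec, Pi.add_apply, map_add]
  ring

theorem IsSol.integrable_rhs {n : ℕ} {F : ℝ → Matrix (Fin n) (Fin n) ℂ} (hF : IsFrakF n F)
    {l : ℂ} {Y : ℝ → Fin n → ℂ} (hY : IsSol n F l Y) (j : Fin n) :
    IntervalIntegrable (fun t => ((F t + LambdaMat n l).mulVec (Y t)) j) volume 0 1 := by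
  simp only [Matrix.mulVec, dotProduct, Matrix.add_apply]
  have hk : ∀ k : Fin n, IntervalIntegrable
      (fun t => (F t j k + LambdaMat n l j k) * Y t k) volume 0 1 := by
    intro k
    have hFk : IntervalIntegrable (fun t => F t j k) volume 0 1 := by
      rw [intervalIntegrable_iff_integrableOn_Icc_of_le zero_le_one]
      exact hF.1 j k
    have hYk : ContinuousOn (fun t => Y t k) (Set.uIcc 0 1) := by
      rw [Set.uIcc_of_le zero_le_one]
      exact (continuous_apply k).comp_continuousOn hY.1
    have hc : IntervalIntegrable (fun _ : ℝ => LambdaMat n l j k) volume 0 1 :=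
      intervalIntegrable_const
    exact (hFk.add hc).mul_continuousOn hYk
  exact ⟨integrable_finsetSum _ fun k _ => (hk k).1, integrable_finsetSum _ fun k _ => (hk k).2⟩

/-- The integrated Lagrange identity: for a solution `Y` at a real spectral parameter `l₀` and a
solution `Z` at `l`, the increment of the bracket of `conj Y` and `Z` over `[0,1]` equals
`(l - l₀) ∫₀¹ conj Y₀ · Z₀`. -/
theorem lagrange {n : ℕ} (hn : Even n) (z : Fin n) (hz : (z : ℕ) = 0)
    {F : ℝ → Matrix (Fin n) (Fin n) ℂ} (hF : IsFrakFPlus n F) {l₀ : ℝ} {l : ℂ}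
    {Y Z : ℝ → Fin n → ℂ} (hY : IsSol n F l₀ Y) (hZ : IsSol n F l Z) :
    bracket n (fun x j => (starRingEnd ℂ) (Y x j)) Z 1
        - bracket n (fun x j => (starRingEnd ℂ) (Y x j)) Z 0
      = (l - l₀) * ∫ x in (0:ℝ)..1, (starRingEnd ℂ) (Y x z) * Z x z := by
  have hparts := fun j : Fin n => integral_parts
    (f := fun x => (starRingEnd ℂ) (Y x j)) (g := fun x => Z x j.rev)
    (f' := fun x => (starRingEnd ℂ) (((F x + LambdaMat n l₀).mulVec (Y x)) j))
    (g' := fun x => ((F x + LambdaMat n l).mulVec (Z x)) j.rev)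
    (by
      have h := hY.integrable_rhs hF.1 j
      have hc := fun s (h : IntegrableOn (fun t => ((F t + LambdaMat n l₀).mulVec (Y t)) j) s) =>
        (Complex.conjCLE : ℂ →L[ℝ] ℂ).integrable_comp h
      exact ⟨hc _ h.1, hc _ h.2⟩)
    (hZ.integrable_rhs hF.1 j.rev)
    (by
      intro x hx
      rw [hY.2 x hx j, map_add]
      congr 1
      simp only [intervalIntegral, map_sub, integral_conj])
    (fun x hx => hZ.2 x hx j.rev)
  have hsum : bracket n (fun x j => (starRingEnd ℂ) (Y x j)) Z 1
        - bracket n (fun x j => (starRingEnd ℂ) (Y x j)) Z 0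
      = ∑ j : Fin n, ∫ x in (0:ℝ)..1, (-1 : ℂ) ^ (j : ℕ) *
        ((starRingEnd ℂ) (((F x + LambdaMat n l₀).mulVec (Y x)) j) * Z x j.rev
        + (starRingEnd ℂ) (Y x j) * ((F x + LambdaMat n l).mulVec (Z x)) j.rev) := by
    rw [bracket, bracket, ← Finset.sum_sub_distrib]
    refine Finset.sum_congr rfl fun j _ => ?_
    rw [intervalIntegral.integral_const_mul, (hparts j).2]
    ring
  rw [hsum, ← intervalIntegral.integral_finsetSum fun j _ => (hparts j).1.const_mul _,
    ← intervalIntegral.integral_const_mul]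
  refine intervalIntegral.integral_congr_ae ?_
  have hsymm := (ae_restrict_iff' measurableSet_Icc).1 hF.2
  filter_upwards [hsymm] with x hx hx'
  rw [Set.uIoc_of_le zero_le_one] at hx'
  exact lagrange_pointwise_s3 hn z hz (F x) (hx (Set.Ioc_subset_Icc_self hx')) l₀ l (Y x) (Z x)

/-! ### The limit of the weighted solutions -/

/-- Lemma 3.1 (concrete form): in the self-adjoint even-order case `n = 2p`, if `φ` is the
eigenfunction `Φ_{p+1}(·,λ₀)` of the middle problem `L_p` at a real `λ₀` and
`(λ_m - λ₀)·Ψ_{m,0} → β·φ₀` uniformly on `[0,1]` for Weyl-type solutions `Ψ_m`, then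
`β·∫₀¹ |φ₀|² dx = (-1)^{p+1}`; in particular `β` is real and `(-1)^{p+1} β > 0`. -/
theorem statement3 (p : ℕ) (hp : 1 ≤ p) (F : ℝ → Matrix (Fin (2 * p)) (Fin (2 * p)) ℂ)
    (hF : IsFrakFPlus (2 * p) F) (lam₀ : ℝ) (β : ℂ)
    (φ : ℝ → Fin (2 * p) → ℂ) (hφ : IsSol (2 * p) F (lam₀ : ℂ) φ)
    (hφ0 : ∀ j : Fin (2 * p), (j : ℕ) ≤ p → φ 0 j = if (j : ℕ) = p then 1 else 0)
    (hφ1 : ∀ j : Fin (2 * p), (j : ℕ) < p → φ 1 j = 0)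
    (lam : ℕ → ℂ) (Ψ : ℕ → ℝ → Fin (2 * p) → ℂ)
    (hΨ : ∀ m, IsSol (2 * p) F (lam m) (Ψ m))
    (hΨ0 : ∀ m, ∀ j : Fin (2 * p), (j : ℕ) ≤ p - 1 →
      Ψ m 0 j = if (j : ℕ) = p - 1 then 1 else 0)
    (hΨ1 : ∀ m, ∀ j : Fin (2 * p), (j : ℕ) ≤ p - 1 → Ψ m 1 j = 0)
    (hconv : TendstoUniformlyOn
      (fun m x => (lam m - (lam₀ : ℂ)) * Ψ m x ⟨0, by omega⟩)
      (fun x => β * φ x ⟨0, by omega⟩) Filter.atTop (Set.Icc (0:ℝ) 1)) :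
    β * ((∫ x in (0:ℝ)..1, ‖φ x ⟨0, by omega⟩‖ ^ 2 : ℝ) : ℂ) = (-1 : ℂ) ^ (p + 1) ∧
    β.im = 0 ∧ 0 < (-1 : ℝ) ^ (p + 1) * β.re := by
  set z : Fin (2 * p) := ⟨0, by omega⟩ with hz
  have hmem : ∀ x ∈ Set.uIoc (0:ℝ) 1, x ∈ Set.Icc (0:ℝ) 1 := fun x hx => by
    rw [Set.uIoc_of_le zero_le_one] at hx
    exact Set.Ioc_subset_Icc_self hx
  have hφc : ContinuousOn (fun x => (starRingEnd ℂ) (φ x z)) (Set.uIcc 0 1) := by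
    rw [Set.uIcc_of_le zero_le_one]
    exact Complex.continuous_conj.comp_continuousOn ((continuous_apply z).comp_continuousOn hφ.1)
  have hΨc : ∀ m, ContinuousOn (fun x => (lam m - (lam₀ : ℂ)) * Ψ m x z) (Set.Icc 0 1) :=
    fun m => continuousOn_const.mul ((continuous_apply z).comp_continuousOn (hΨ m).1)
  -- The boundary values kill the bracket at `1`, and at `0` only the index `j = p` contributes.
  have hm : ∀ m, ∫ x in (0:ℝ)..1, (starRingEnd ℂ) (φ x z) * ((lam m - (lam₀ : ℂ)) * Ψ m x z)
      = (-1 : ℂ) ^ (p + 1) := by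
    intro m
    have hL := lagrange (even_two_mul p) z rfl hF hφ (hΨ m)
    have hB1 : bracket (2 * p) (fun x j => (starRingEnd ℂ) (φ x j)) (Ψ m) 1 = 0 := by
      refine Finset.sum_eq_zero fun j _ => ?_
      by_cases hj : (j : ℕ) < p
      · simp [hφ1 j hj]
      · rw [hΨ1 m j.rev (by rw [Fin.val_rev]; omega), mul_zero]
    have hB0 : bracket (2 * p) (fun x j => (starRingEnd ℂ) (φ x j)) (Ψ m) 0 = (-1) ^ p := by
      rw [bracket, Finset.sum_eq_single (⟨p, by omega⟩ : Fin (2 * p))]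
      · have hr : (((⟨p, by omega⟩ : Fin (2 * p)).rev : Fin (2 * p)) : ℕ) = p - 1 := by
          rw [Fin.val_rev]; simp only; omega
        rw [hΨ0 m _ hr.le, if_pos hr, hφ0 _ le_rfl]
        simp
      · intro j _ hj
        have hj' : (j : ℕ) ≠ p := fun h => hj (Fin.ext h)
        rcases lt_or_gt_of_ne hj' with h | h
        · simp [hφ0 j h.le, hj']
        · have hr : ((j.rev : Fin (2 * p)) : ℕ) < p - 1 := by
            rw [Fin.val_rev]; omega
          rw [hΨ0 m _ hr.le, if_neg hr.ne, mul_zero]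
      · simp
    rw [hB1, hB0] at hL
    have hpull : ∫ x in (0:ℝ)..1, (starRingEnd ℂ) (φ x z) * ((lam m - (lam₀ : ℂ)) * Ψ m x z)
        = (lam m - lam₀) * ∫ x in (0:ℝ)..1, (starRingEnd ℂ) (φ x z) * Ψ m x z := by
      rw [← intervalIntegral.integral_const_mul]
      congr 1
      ext x
      ring
    rw [hpull, ← hL]
    ring
  have hlim : Filter.Tendsto
      (fun m => ∫ x in (0:ℝ)..1, (starRingEnd ℂ) (φ x z) * ((lam m - (lam₀ : ℂ)) * Ψ m x z))
      Filter.atTop (nhds (∫ x in (0:ℝ)..1, (starRingEnd ℂ) (φ x z) * (β * φ x z))) := by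
    -- A uniform bound on the tail of the sequence serves as the dominating function.
    obtain ⟨C, hC⟩ := isCompact_uIcc.exists_bound_of_continuousOn hφc
    have hC0 : 0 ≤ C := (norm_nonneg _).trans (hC 0 (by simp))
    have hev := Metric.tendstoUniformlyOn_iff.1 hconv 1 one_pos
    refine intervalIntegral.tendsto_integral_filter_of_dominated_convergence
      (fun _ => C * (‖β‖ * C + 1)) ?_ ?_ intervalIntegrable_const ?_
    · refine Filter.Eventually.of_forall fun m => ?_
      refine ContinuousOn.aestronglyMeasurable ?_ measurableSet_uIoc
      refine (hφc.mono Set.uIoc_subset_uIcc).mul ((hΨc m).mono hmem)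
    · filter_upwards [hev] with m hm'
      refine Filter.Eventually.of_forall fun x hx => ?_
      have h1 := hm' x (hmem x hx)
      have h2 := hC x (Set.uIoc_subset_uIcc hx)
      rw [norm_mul]
      refine mul_le_mul h2 ?_ (norm_nonneg _) hC0
      rw [dist_comm, dist_eq_norm] at h1
      have h3 := norm_le_norm_add_norm_sub' ((lam m - (lam₀ : ℂ)) * Ψ m x z) (β * φ x z)
      have h4 : ‖β * φ x z‖ ≤ ‖β‖ * C := by
        rw [norm_mul]
        gcongr
        simpa using h2
      linarith
    · refine Filter.Eventually.of_forall fun x hx => ?_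
      exact (hconv.tendsto_at (hmem x hx)).const_mul _
  simp only [hm] at hlim
  have hkey : β * ((∫ x in (0:ℝ)..1, ‖φ x z‖ ^ 2 : ℝ) : ℂ) = (-1 : ℂ) ^ (p + 1) := by
    rw [← tendsto_nhds_unique hlim tendsto_const_nhds, ← intervalIntegral.integral_ofReal,
      ← intervalIntegral.integral_const_mul]
    congr 1
    ext x
    have := Complex.conj_mul' (φ x z)
    push_cast
    linear_combination (-β) * this
  refine ⟨hkey, ?_⟩
  set I : ℝ := ∫ x in (0:ℝ)..1, ‖φ x z‖ ^ 2 with hI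
  have hI0 : 0 ≤ I := intervalIntegral.integral_nonneg zero_le_one fun x _ => by positivity
  have hIne : I ≠ 0 := by
    intro h
    rw [h, Complex.ofReal_zero, mul_zero] at hkey
    exact pow_ne_zero (p + 1) (neg_ne_zero.2 one_ne_zero) hkey.symm
  have hIpos : 0 < I := lt_of_le_of_ne hI0 hIne.symm
  have hkey' : β * (I : ℂ) = (((-1 : ℝ) ^ (p + 1) : ℝ) : ℂ) := by
    rw [hkey]; push_cast; rfl
  have him := congrArg Complex.im hkey'
  have hre := congrArg Complex.re hkey'
  rw [Complex.im_mul_ofReal, Complex.ofReal_im] at him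
  rw [Complex.re_mul_ofReal, Complex.ofReal_re] at hre
  refine ⟨(mul_eq_zero.1 him).resolve_right hIne, ?_⟩
  have hsq : (-1 : ℝ) ^ (p + 1) * (-1 : ℝ) ^ (p + 1) = 1 := by
    rw [← mul_pow]; simp
  have hpos : 0 < ((-1 : ℝ) ^ (p + 1) * β.re) * I := by
    rw [mul_assoc, hre, hsq]
    exact one_pos
  exact pos_of_mul_pos_left hpos hI0
end

section
/- Let n ≥ 2, F ∈ 𝔉_n^+, 1 ≤ k ≤ n−1, and λ ∈ ℂ. Then λ is an eigenvalue of the problem L_k for F (i.e., there exists a not identically zero solution Y of Y' = (F + Λ(λ))Y on [0,1] with Y_j(0) = 0 for 0 ≤ j ≤ k−1 and Y_j(1) = 0 for 0 ≤ j ≤ n−k−1) if and only if (−1)ⁿ·conj(λ) is an eigenvalue of the problem L_{n−k} for F (defined analogously with Y_j(0) = 0 for 0 ≤ j ≤ n−k−1 and Y_j(1) = 0 for 0 ≤ j ≤ k−1). (Eigenvalue part of the self-adjointness relation λ_{l,k} = (−1)ⁿ·conj(λ_{l,n−k}) of Section 3.) -/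
/-!
Let `Y` be an eigenfunction of `L_k`, and let `S x` be the resolvent of the star system
`Z' = (F* + (-1)^n Λ(λ)) Z`, so that `x ↦ S x c` is its solution starting at `c`. By Lagrange's
identity the bilinear bracket `⟨S · c, Y⟩` is constant on `[0,1]` (`bracket_eq`).

Restrict `c` to the `k`-dimensional space of vectors whose first `n - k` coordinates vanish and
send it to the first `k` coordinates of `S 1 c`. If this map `ℂᵏ → ℂᵏ` were injective it would be
surjective. But the boundary conditions on `Y 0` make the bracket at `0` vanish, and those on `Y 1`
leave in the bracket at `1` only the first `k` coordinates of `S 1 c`; as these are arbitrary,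
`Y 1 = 0`. Since `S x` is onto for every `x`, constancy of the bracket then gives `Y = 0` on
`[0,1]`, a contradiction. Hence some `c ≠ 0` produces a solution of the star system satisfying the
boundary conditions of `L_{n-k}`. For `F ∈ 𝔉_n⁺` its complex conjugate solves the original system
with parameter `(-1)^n conj(λ)` (`IsSolStar.conj`). The converse is the same statement for `n - k`
and `(-1)^n conj(λ)`.

Two analytic facts are needed for merely integrable coefficients. Existence of solutions
(`exists_integral_sol`) is Banach's fixed point theorem in a norm weighted by `exp (2 ∫ ‖A‖)`.
Constancy of the bracket holds because it is absolutely continuous with derivative zero almost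
everywhere. Uniqueness of solutions is never used: nondegeneracy of the bracket, applied to the
resolvents of the system and of the star system, shows that the resolvent is invertible.
-/

open MeasureTheory

/-! ### Existence of solutions for integrable coefficients -/

/-- The weight is `exp (2 ∫₀ˣ a)`. The bound needs only that the integral of the derivative of a
monotone function is at most its increment. -/
lemma exists_weight (a : ℝ → ℝ) (ha : Integrable a) (ha0 : ∀ t, 0 ≤ a t) :
    ∃ w : ℝ → ℝ, Continuous w ∧ (∀ x, 0 < w x) ∧
      ∀ x, 0 ≤ x → ∫ t in (0:ℝ)..x, a t * w t ≤ w x / 2 := by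
  have hi : ∀ u v : ℝ, IntervalIntegrable a volume u v := fun u v => ha.intervalIntegrable
  set Φ : ℝ → ℝ := fun x => ∫ t in (0:ℝ)..x, a t with hΦ
  have hΦc : Continuous Φ := intervalIntegral.continuous_primitive hi 0
  have hΦm : Monotone Φ := by
    intro u v huv
    have h1 : Φ v - Φ u = ∫ t in u..v, a t :=
      intervalIntegral.integral_interval_sub_left (hi 0 v) (hi 0 u)
    have h2 : 0 ≤ ∫ t in u..v, a t :=
      intervalIntegral.integral_nonneg huv (fun t _ => ha0 t)
    linarith
  refine ⟨fun x => Real.exp (2 * Φ x), by fun_prop, fun x => Real.exp_pos _, fun x hx => ?_⟩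
  have hwm : MonotoneOn (fun x => Real.exp (2 * Φ x)) (Set.uIcc 0 x) := by
    intro u _ v _ huv
    have := hΦm huv
    simp only [Real.exp_le_exp]
    linarith
  have hd := hwm.intervalIntegral_deriv_mem_uIcc
  have h0x : Real.exp (2 * Φ 0) ≤ Real.exp (2 * Φ x) :=
    hwm (by simp) (by simp) hx
  rw [Set.uIcc_of_le (by linarith)] at hd
  have hd2 := hd.2
  have hcongr : ∫ t in (0:ℝ)..x, deriv (fun x => Real.exp (2 * Φ x)) t
      = ∫ t in (0:ℝ)..x, 2 * (a t * Real.exp (2 * Φ t)) := by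
    apply intervalIntegral.integral_congr_ae
    filter_upwards [(hi 0 x).ae_hasDerivAt_integral] with t ht htm
    have h1 := ht (Set.uIoc_subset_uIcc htm) 0 (by simp)
    have h2 := ((h1.const_mul 2).exp).deriv
    simp only [hΦ]
    rw [h2]
    ring
  rw [hcongr, intervalIntegral.integral_const_mul] at hd2
  have := Real.exp_pos (2 * Φ 0)
  linarith

lemma intervalIntegrable_mulVec_s5 {n : ℕ} {A : ℝ → Matrix (Fin n) (Fin n) ℂ}
    {V : ℝ → Fin n → ℂ} {u v : ℝ} (hA : ∀ i j, IntervalIntegrable (fun t => A t i j) volume u v)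
    (hV : ContinuousOn V (Set.uIcc u v)) (i : Fin n) :
    IntervalIntegrable (fun t => (A t).mulVec (V t) i) volume u v := by
  have h : IntervalIntegrable (∑ j, fun t => A t i j * V t j) volume u v :=
    IntervalIntegrable.sum _ fun j _ =>
      (hA i j).mul_continuousOn ((continuous_apply j).comp_continuousOn hV)
  convert h using 1
  ext t
  simp [Matrix.mulVec, dotProduct]

/-- Linear initial value problems with integrable coefficients have solutions on `[0,1]`. With the
weight `w` of `exists_weight` for `a = ∑ ‖A i j‖`, the Picard map for `U = w⁻¹ Y` is a contraction
of ratio `1/2` in the sup norm. -/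
lemma exists_integral_sol (n : ℕ) (A : ℝ → Matrix (Fin n) (Fin n) ℂ)
    (hA : ∀ i j, Integrable (fun t => A t i j)) (c : Fin n → ℂ) :
    ∃ Y : ℝ → Fin n → ℂ, Continuous Y ∧ ∀ x ∈ Set.Icc (0:ℝ) 1, ∀ j,
      Y x j = c j + ∫ t in (0:ℝ)..x, ((A t).mulVec (Y t)) j := by
  set a : ℝ → ℝ := fun t => ∑ i, ∑ j, ‖A t i j‖ with ha_def
  have ha : Integrable a :=
    integrable_finsetSum _ fun i _ => integrable_finsetSum _ fun j _ => (hA i j).norm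
  have ha0 : ∀ t, 0 ≤ a t := fun t => by positivity
  have hmul : ∀ t (v : Fin n → ℂ) (r : ℝ), (∀ j, ‖v j‖ ≤ r) → ∀ i,
      ‖(A t).mulVec v i‖ ≤ a t * r := by
    intro t v r hv i
    calc ‖(A t).mulVec v i‖ ≤ ∑ j, ‖A t i j * v j‖ := by
          simp only [Matrix.mulVec, dotProduct]
          exact norm_sum_le _ _
      _ ≤ ∑ j, ‖A t i j‖ * r := by
          gcongr with j
          rw [norm_mul]
          gcongr
          exact hv j
      _ = (∑ j, ‖A t i j‖) * r := by rw [Finset.sum_mul]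
      _ ≤ a t * r := by
          have hr : 0 ≤ r := (norm_nonneg _).trans (hv i)
          gcongr
          exact Finset.single_le_sum (f := fun i => ∑ j, ‖A t i j‖)
            (fun i _ => by positivity) (Finset.mem_univ i)
  obtain ⟨w, hwc, hw0, hw⟩ := exists_weight a ha ha0
  have hint : ∀ (V : ℝ → Fin n → ℂ), Continuous V → ∀ i u v,
      IntervalIntegrable (fun t => (A t).mulVec (V t) i) volume u v := by
    intro V hV i u v
    exact intervalIntegrable_mulVec_s5 (fun i j => (hA i j).intervalIntegrable) hV.continuousOn i
  -- the conjugated unknown `Y = w U` is extended from `[0,1]` to `ℝ` by constants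
  let V : C(Set.Icc (0:ℝ) 1, Fin n → ℂ) → ℝ → Fin n → ℂ := fun U t =>
    (w t : ℂ) • Set.IccExtend zero_le_one U t
  have hV : ∀ U, Continuous (V U) := fun U => by
    have h := U.continuous.Icc_extend' (h := zero_le_one)
    exact (Complex.continuous_ofReal.comp hwc).smul h
  let T : C(Set.Icc (0:ℝ) 1, Fin n → ℂ) → C(Set.Icc (0:ℝ) 1, Fin n → ℂ) := fun U =>
    ⟨fun x j => ((w x : ℂ))⁻¹ * (c j + ∫ t in (0:ℝ)..x, ((A t).mulVec (V U t)) j), by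
      refine continuous_pi fun j => ?_
      have h1 : Continuous fun x : ℝ => ∫ t in (0:ℝ)..x, ((A t).mulVec (V U t)) j :=
        intervalIntegral.continuous_primitive (hint _ (hV U) j) 0
      have h2 : Continuous fun x : ℝ => ((w x : ℂ))⁻¹ :=
        (Complex.continuous_ofReal.comp hwc).inv₀ fun x => by
          simpa using (hw0 x).ne'
      exact (h2.comp continuous_subtype_val).mul
        (continuous_const.add (h1.comp continuous_subtype_val))⟩
  have hT : ContractingWith (1/2) T := by
    refine ⟨by rw [← NNReal.coe_lt_coe]; norm_num, LipschitzWith.of_dist_le_mul fun U U' => ?_⟩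
    rw [ContinuousMap.dist_le (by positivity)]
    rintro ⟨x, hx⟩
    rw [dist_pi_le_iff (by positivity)]
    intro j
    have hdiff : ∀ t, ∀ i, ‖(V U t - V U' t) i‖ ≤ w t * dist U U' := by
      intro t i
      have : V U t - V U' t = (w t : ℂ) •
          (Set.IccExtend zero_le_one U t - Set.IccExtend zero_le_one U' t) := by
        simp only [V, smul_sub]
      rw [this, Pi.smul_apply, norm_smul, Complex.norm_real, Real.norm_of_nonneg (hw0 t).le]
      have := (hw0 t).le
      gcongr
      refine (norm_le_pi_norm _ i).trans ?_
      rw [← dist_eq_norm]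
      exact ContinuousMap.dist_apply_le_dist (f := U) (g := U') _
    have hle : ‖∫ t in (0:ℝ)..x, (A t).mulVec (V U t - V U' t) j‖ ≤ w x / 2 * dist U U' := by
      calc ‖∫ t in (0:ℝ)..x, (A t).mulVec (V U t - V U' t) j‖
          ≤ ∫ t in (0:ℝ)..x, a t * w t * dist U U' := by
            refine intervalIntegral.norm_integral_le_of_norm_le hx.1 ?_ ?_
            · refine Filter.Eventually.of_forall fun t _ => ?_
              rw [mul_assoc]
              exact hmul t _ _ (hdiff t) j
            · exact (ha.intervalIntegrable.mul_continuousOn hwc.continuousOn).mul_const _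
        _ = (∫ t in (0:ℝ)..x, a t * w t) * dist U U' := by
            rw [intervalIntegral.integral_mul_const]
        _ ≤ _ := by
            have := hw x hx.1
            gcongr
    have heq : T U ⟨x, hx⟩ j - T U' ⟨x, hx⟩ j
        = ((w x : ℂ))⁻¹ * ∫ t in (0:ℝ)..x, (A t).mulVec (V U t - V U' t) j := by
      simp only [T, ContinuousMap.coe_mk, Matrix.mulVec_sub, Pi.sub_apply]
      rw [intervalIntegral.integral_sub (hint _ (hV U) j _ _) (hint _ (hV U') j _ _)]
      ring
    rw [dist_eq_norm, heq, norm_mul, norm_inv, Complex.norm_real, Real.norm_of_nonneg (hw0 x).le,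
      inv_mul_le_iff₀ (hw0 x)]
    refine hle.trans (le_of_eq ?_)
    push_cast
    ring
  have hfix := hT.fixedPoint_isFixedPt
  set U := hT.fixedPoint
  refine ⟨V U, hV U, fun x hx j => ?_⟩
  have h1 : (T U) ⟨x, hx⟩ j = U ⟨x, hx⟩ j := by rw [hfix]
  have h2 : V U x j = (w x : ℂ) * U ⟨x, hx⟩ j := by
    simp only [V, Pi.smul_apply, smul_eq_mul]
    rw [Set.IccExtend_of_mem _ _ hx]
  have hne : (w x : ℂ) ≠ 0 := by simpa using (hw0 x).ne'
  rw [h2, ← h1]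
  simp only [T, ContinuousMap.coe_mk]
  rw [mul_inv_cancel_left₀ hne]

lemma intervalIntegrable_add_lambda {n : ℕ} {F : ℝ → Matrix (Fin n) (Fin n) ℂ}
    (hF : ∀ i j, IntegrableOn (fun x => F x i j) (Set.Icc (0:ℝ) 1)) (lam : ℂ) (i j : Fin n)
    {x : ℝ} (hx : x ∈ Set.Icc (0:ℝ) 1) :
    IntervalIntegrable (fun t => (F t + LambdaMat n lam) i j) volume 0 x := by
  have h : IntervalIntegrable (fun t => F t i j) volume 0 x :=
    (intervalIntegrable_iff_integrableOn_Icc_of_le hx.1).2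
      ((hF i j).mono_set (Set.Icc_subset_Icc_right hx.2))
  simpa using h.add (intervalIntegrable_const (c := LambdaMat n lam i j))

lemma IsSol.intervalIntegrable {n : ℕ} {F : ℝ → Matrix (Fin n) (Fin n) ℂ}
    (hF : ∀ i j, IntegrableOn (fun x => F x i j) (Set.Icc (0:ℝ) 1)) {lam : ℂ}
    {Y : ℝ → Fin n → ℂ} (hY : IsSol n F lam Y) (i : Fin n) {x : ℝ} (hx : x ∈ Set.Icc (0:ℝ) 1) :
    IntervalIntegrable (fun t => (F t + LambdaMat n lam).mulVec (Y t) i) volume 0 x := by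
  refine intervalIntegrable_mulVec_s5
    (fun i j => intervalIntegrable_add_lambda hF lam i j hx) (hY.1.mono ?_) i
  rw [Set.uIcc_of_le hx.1]
  exact Set.Icc_subset_Icc_right hx.2

lemma exists_isSol {n : ℕ} {F : ℝ → Matrix (Fin n) (Fin n) ℂ}
    (hF : ∀ i j, IntegrableOn (fun x => F x i j) (Set.Icc (0:ℝ) 1)) (lam : ℂ) (c : Fin n → ℂ) :
    ∃ Y, IsSol n F lam Y ∧ Y 0 = c := by
  obtain ⟨Y, hY, h⟩ := exists_integral_sol n
    (fun t i j => (Set.Icc (0:ℝ) 1).indicator (fun t => (F t + LambdaMat n lam) i j) t)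
    (fun i j => by
      rw [integrable_indicator_iff measurableSet_Icc]
      exact (intervalIntegrable_iff_integrableOn_Icc_of_le zero_le_one).1
        (intervalIntegrable_add_lambda hF lam i j (by simp))) c
  have h0 : Y 0 = c := by
    ext j
    simpa using h 0 (by simp) j
  refine ⟨Y, ⟨hY.continuousOn, fun x hx j => ?_⟩, h0⟩
  rw [h x hx j, h0]
  congr 1
  refine intervalIntegral.integral_congr fun t ht => ?_
  rw [Set.uIcc_of_le hx.1] at ht
  have ht' : t ∈ Set.Icc (0:ℝ) 1 := ⟨ht.1, ht.2.trans hx.2⟩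
  simp only [Set.indicator_of_mem ht']

/-- A resolvent: `R x c` is the value at `x` of a solution with value `c` at `0`, chosen linearly in
`c` by combining solutions that start at the standard basis vectors. -/
lemma exists_resolvent {n : ℕ} {F : ℝ → Matrix (Fin n) (Fin n) ℂ}
    (hF : ∀ i j, IntegrableOn (fun x => F x i j) (Set.Icc (0:ℝ) 1)) (lam : ℂ) :
    ∃ R : ℝ → (Fin n → ℂ) →ₗ[ℂ] (Fin n → ℂ),
      R 0 = LinearMap.id ∧ ∀ c, IsSol n F lam (fun x => R x c) := by
  choose Z hZ hZ0 using fun i : Fin n => exists_isSol hF lam (Pi.single i 1)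
  refine ⟨fun x => ∑ i, (LinearMap.proj i).smulRight (Z i x), ?_, fun c => ⟨?_, ?_⟩⟩
  · refine LinearMap.ext fun c => funext fun j => ?_
    simp [hZ0, Pi.single_apply]
  · simp only [LinearMap.sum_apply, LinearMap.smulRight_apply, LinearMap.proj_apply]
    exact continuousOn_finsetSum _ fun i _ => (hZ i).1.const_smul (c i)
  · intro x hx j
    simp only [LinearMap.sum_apply, LinearMap.smulRight_apply, LinearMap.proj_apply,
      Matrix.mulVec_sum, Matrix.mulVec_smul, Finset.sum_apply, Pi.smul_apply, smul_eq_mul]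
    rw [intervalIntegral.integral_finsetSum
      (fun i _ => ((hZ i).intervalIntegrable hF j hx).const_mul (c i)),
      ← Finset.sum_add_distrib]
    refine Finset.sum_congr rfl fun i _ => ?_
    rw [intervalIntegral.integral_const_mul, ← mul_add, ← (hZ i).2 x hx j]

/-! ### Constancy of the Lagrange bracket -/

open AbsolutelyContinuousOnInterval in
/-- Mathlib has this for real integrands; the complex case follows by comparison with `∫ ‖f‖`. -/
lemma absolutelyContinuousOnInterval_primitive {f : ℝ → ℂ}
    (hf : IntervalIntegrable f volume 0 1) :
    AbsolutelyContinuousOnInterval (fun x => ∫ t in (0:ℝ)..x, f t) 0 1 := by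
  have hg := hf.norm.absolutelyContinuousOnInterval_intervalIntegral (c := 0) (by simp)
  refine squeeze_zero' (Filter.Eventually.of_forall fun E => by positivity) ?_ hg
  have hE : ∀ᶠ (E : ℕ × (ℕ → ℝ × ℝ)) in totalLengthFilter ⊓ Filter.principal (disjWithin 0 1),
      E ∈ disjWithin 0 1 :=
    Filter.eventually_inf_principal.mpr (by simp)
  filter_upwards [hE] with E hE
  refine Finset.sum_le_sum fun i hi => ?_
  have hm := hE.1 i hi
  have hsub : ∀ {u}, u ∈ Set.uIcc (0:ℝ) 1 → IntervalIntegrable f volume 0 u := fun hu =>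
    hf.mono_set (Set.uIcc_subset_uIcc (by simp) hu)
  rw [dist_comm, dist_comm (∫ v in (0:ℝ)..(E.2 i).1, ‖f v‖), dist_eq_norm, dist_eq_norm,
    intervalIntegral.integral_interval_sub_left (hsub hm.2) (hsub hm.1),
    intervalIntegral.integral_interval_sub_left (hsub hm.2).norm (hsub hm.1).norm]
  exact intervalIntegral.norm_integral_le_abs_integral_norm

lemma absolutelyContinuousOnInterval_const (c : ℂ) :
    AbsolutelyContinuousOnInterval (fun _ : ℝ => c) 0 1 :=
  (LipschitzWith.const c).lipschitzOnWith.absolutelyContinuousOnInterval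

lemma absolutelyContinuousOnInterval_sum {ι : Type*} (s : Finset ι) (f : ι → ℝ → ℂ)
    (hf : ∀ i ∈ s, AbsolutelyContinuousOnInterval (f i) 0 1) :
    AbsolutelyContinuousOnInterval (fun x => ∑ i ∈ s, f i x) 0 1 := by
  classical
  induction s using Finset.induction_on with
  | empty => simpa using absolutelyContinuousOnInterval_const 0
  | insert i s hi ih =>
    simp only [Finset.sum_insert hi]
    exact (hf i (by simp)).fun_add (ih fun j hj => hf j (by simp [hj]))

/-- The coefficient matrix of the star system is the star of that of the original system:
`(F + Λ(μ))* = F* + (-1)^n Λ(μ)`. -/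
lemma FStar_add_lambda {n : ℕ} (F : ℝ → Matrix (Fin n) (Fin n) ℂ) (mu : ℂ) (t : ℝ)
    (a b : Fin n) :
    (FStar n F t + LambdaMat n ((-1) ^ n * mu)) a b
      = (-1 : ℂ) ^ ((a : ℕ) + (b : ℕ) + 1) * (F t + LambdaMat n mu) b.rev a.rev := by
  have hb := b.isLt
  have ha := a.isLt
  simp only [Matrix.add_apply, FStar, LambdaMat, mul_add, Fin.val_rev]
  congr 1
  by_cases h : (a : ℕ) = n - 1 ∧ (b : ℕ) = 0
  · rw [if_pos h, if_pos (by omega), show (a : ℕ) + b + 1 = n by omega]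
  · rw [if_neg h, if_neg (by omega), mul_zero]

/-- Pointwise form of Lagrange's identity: the Leibniz expression for the derivative of the bracket
of two solutions vanishes. -/
lemma lagrange_identity {n : ℕ} (F : ℝ → Matrix (Fin n) (Fin n) ℂ) (mu : ℂ) (t : ℝ)
    (z y : Fin n → ℂ) :
    ∑ j : Fin n, (-1 : ℂ) ^ (j : ℕ) *
      ((FStar n F t + LambdaMat n ((-1) ^ n * mu)).mulVec z j * y j.rev
        + z j * (F t + LambdaMat n mu).mulVec y j.rev) = 0 := by
  set G := F t + LambdaMat n mu with hG
  have h1 : ∀ j : Fin n, (FStar n F t + LambdaMat n ((-1) ^ n * mu)).mulVec z j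
      = ∑ b : Fin n, (-1 : ℂ) ^ ((j : ℕ) + (b : ℕ) + 1) * G b.rev j.rev * z b := fun j => by
    simp only [Matrix.mulVec, dotProduct, FStar_add_lambda, hG]
  have h2 : ∀ j : Fin n, G.mulVec y j.rev = ∑ b : Fin n, G j.rev b.rev * y b.rev := fun j => by
    simp only [Matrix.mulVec, dotProduct]
    exact (Equiv.sum_comp Fin.revPerm fun b => G j.rev b * y b).symm
  simp only [h1, h2, mul_add, Finset.sum_add_distrib, Finset.mul_sum, Finset.sum_mul]
  rw [Finset.sum_comm, ← Finset.sum_add_distrib]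
  refine Finset.sum_eq_zero fun i _ => ?_
  rw [← Finset.sum_add_distrib]
  refine Finset.sum_eq_zero fun j _ => ?_
  have : (-1 : ℂ) ^ (j : ℕ) * (-1 : ℂ) ^ (j : ℕ) = 1 := by
    rw [← mul_pow]; simp
  rw [pow_add, pow_add]
  linear_combination (- (-1 : ℂ) ^ (i : ℕ) * G i.rev j.rev * z i * y j.rev) * this

/-- A sum of products of primitives is constant on `[0,1]` as soon as its formal derivative,
computed by the Leibniz rule, vanishes: the sum is absolutely continuous. -/
lemma sum_mul_primitive_eq {ι : Type*} [Fintype ι] (s : ι → ℂ) {p q g h : ι → ℝ → ℂ}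
    (hg : ∀ j, IntervalIntegrable (g j) volume 0 1)
    (hh : ∀ j, IntervalIntegrable (h j) volume 0 1)
    (hp : ∀ x ∈ Set.Icc (0:ℝ) 1, ∀ j, p j x = p j 0 + ∫ t in (0:ℝ)..x, g j t)
    (hq : ∀ x ∈ Set.Icc (0:ℝ) 1, ∀ j, q j x = q j 0 + ∫ t in (0:ℝ)..x, h j t)
    (hzero : ∀ t, ∑ j, s j * (g j t * q j t + p j t * h j t) = 0)
    {x : ℝ} (hx : x ∈ Set.Icc (0:ℝ) 1) :
    ∑ j, s j * (p j x * q j x) = ∑ j, s j * (p j 0 * q j 0) := by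
  -- `P` and `Q` continue `p` and `q` past the endpoints, so that two-sided derivatives make sense
  obtain ⟨P, hP⟩ : ∃ P : ι → ℝ → ℂ, P = fun j x => p j 0 + ∫ t in (0:ℝ)..x, g j t := ⟨_, rfl⟩
  obtain ⟨Q, hQ⟩ : ∃ Q : ι → ℝ → ℂ, Q = fun j x => q j 0 + ∫ t in (0:ℝ)..x, h j t := ⟨_, rfl⟩
  have eP : ∀ x ∈ Set.Icc (0:ℝ) 1, ∀ j, p j x = P j x := by rw [hP]; exact hp
  have eQ : ∀ x ∈ Set.Icc (0:ℝ) 1, ∀ j, q j x = Q j x := by rw [hQ]; exact hq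
  have aP : ∀ j, AbsolutelyContinuousOnInterval (P j) 0 1 := fun j => by
    rw [hP]
    exact (absolutelyContinuousOnInterval_const _).fun_add
      (absolutelyContinuousOnInterval_primitive (hg j))
  have aQ : ∀ j, AbsolutelyContinuousOnInterval (Q j) 0 1 := fun j => by
    rw [hQ]
    exact (absolutelyContinuousOnInterval_const _).fun_add
      (absolutelyContinuousOnInterval_primitive (hh j))
  have dP : ∀ᵐ x, ∀ j, x ∈ Set.uIcc (0:ℝ) 1 → HasDerivAt (P j) (g j x) x := by
    rw [hP]
    refine ae_all_iff.2 fun j => ?_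
    filter_upwards [(hg j).ae_hasDerivAt_integral] with t ht htm
    exact (ht htm 0 (by simp)).const_add _
  have dQ : ∀ᵐ x, ∀ j, x ∈ Set.uIcc (0:ℝ) 1 → HasDerivAt (Q j) (h j x) x := by
    rw [hQ]
    refine ae_all_iff.2 fun j => ?_
    filter_upwards [(hh j).ae_hasDerivAt_integral] with t ht htm
    exact (ht htm 0 (by simp)).const_add _
  have aB : AbsolutelyContinuousOnInterval (fun x => ∑ j, s j * (P j x * Q j x)) 0 1 :=
    absolutelyContinuousOnInterval_sum _ _ fun j _ => ((aP j).smul (aQ j)).const_smul (s j)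
  have dB : ∀ᵐ x, x ∈ Set.uIcc (0:ℝ) 1 →
      HasDerivAt (fun x => ∑ j, s j * (P j x * Q j x)) 0 x := by
    filter_upwards [dP, dQ] with t hz hy ht
    have hd : HasDerivAt (fun x => ∑ j, s j * (P j x * Q j x))
        (∑ j, s j * (g j t * Q j t + P j t * h j t)) t :=
      HasDerivAt.fun_sum fun j _ => ((hz j ht).mul (hy j ht)).const_mul (s j)
    rw [Set.uIcc_of_le zero_le_one] at ht
    simp only [← eP t ht, ← eQ t ht, hzero t] at hd
    convert hd using 1
  obtain ⟨C, hC⟩ := aB.const_of_ae_hasDerivAt_zero dB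
  rw [Set.uIcc_of_le zero_le_one] at hC
  have h0 : (0:ℝ) ∈ Set.Icc (0:ℝ) 1 := by simp
  simp only [eP x hx, eQ x hx, eP 0 h0, eQ 0 h0]
  rw [hC x hx, hC 0 h0]

/-- Lagrange's identity: the bracket of a solution of the star system with a solution of the
original system is constant on `[0,1]`. -/
lemma bracket_eq {n : ℕ} {F : ℝ → Matrix (Fin n) (Fin n) ℂ}
    (hF : ∀ i j, IntegrableOn (fun x => F x i j) (Set.Icc (0:ℝ) 1)) {mu : ℂ}
    {Z Y : ℝ → Fin n → ℂ} (hZ : IsSolStar n F mu Z) (hY : IsSol n F mu Y) {x : ℝ}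
    (hx : x ∈ Set.Icc (0:ℝ) 1) : bracket n Z Y x = bracket n Z Y 0 := by
  have hFs : ∀ i j, IntegrableOn (fun x => FStar n F x i j) (Set.Icc (0:ℝ) 1) := fun i j =>
    (hF _ _).const_mul _
  have h1 : (1:ℝ) ∈ Set.Icc (0:ℝ) 1 := by simp
  simp only [bracket, mul_assoc]
  exact sum_mul_primitive_eq (fun j : Fin n => (-1 : ℂ) ^ (j : ℕ))
    (p := fun j x => Z x j) (q := fun j x => Y x j.rev)
    (fun j => IsSol.intervalIntegrable hFs hZ j h1)
    (fun j => hY.intervalIntegrable hF j.rev h1)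
    hZ.2 (fun x hx j => hY.2 x hx j.rev)
    (fun t => lagrange_identity F mu t (Z t) (Y t)) hx

/-! ### Eigenvalues of the conjugate problem -/

/-- For `F ∈ 𝔉_n⁺` one has `conj F* = F` almost everywhere. -/
lemma IsSolStar.conj {n : ℕ} {F : ℝ → Matrix (Fin n) (Fin n) ℂ} (hF : IsFrakFPlus n F)
    {mu : ℂ} {Z : ℝ → Fin n → ℂ} (hZ : IsSolStar n F mu Z) :
    IsSol n F ((-1) ^ n * (starRingEnd ℂ) mu) (fun x j => (starRingEnd ℂ) (Z x j)) := by
  refine ⟨?_, fun x hx j => ?_⟩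
  · exact continuousOn_pi.2 fun j =>
      Complex.continuous_conj.comp_continuousOn ((continuous_apply j).comp_continuousOn hZ.1)
  · beta_reduce
    rw [hZ.2 x hx j, map_add]
    congr 1
    rw [intervalIntegral.integral_of_le hx.1, intervalIntegral.integral_of_le hx.1,
      ← integral_conj]
    refine integral_congr_ae ?_
    have hae := ae_restrict_of_ae_restrict_of_subset
      (Set.Ioc_subset_Icc_self.trans (Set.Icc_subset_Icc_right hx.2)) hF.2
    filter_upwards [hae] with t ht
    simp only [Matrix.mulVec, dotProduct, map_sum, map_mul, Matrix.add_apply]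
    refine Finset.sum_congr rfl fun b _ => ?_
    congr 1
    rw [ht j b]
    simp only [FStar, LambdaMat]
    split_ifs <;> simp

/-- One direction of the equivalence; the other follows by replacing `k` and `λ` by `n - k` and
`(-1)^n conj(λ)`. -/
lemma exists_sol_ne_zero {n : ℕ} {F : ℝ → Matrix (Fin n) (Fin n) ℂ} (hF : IsFrakFPlus n F)
    {k : ℕ} (hkn : k ≤ n) {lam : ℂ}
    (h : ∃ Y : ℝ → Fin n → ℂ, IsSol n F lam Y ∧
      (∀ j : Fin n, (j : ℕ) < k → Y 0 j = 0) ∧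
      (∀ j : Fin n, (j : ℕ) < n - k → Y 1 j = 0) ∧
      (∃ x ∈ Set.Icc (0:ℝ) 1, Y x ≠ 0)) :
    ∃ Y : ℝ → Fin n → ℂ, IsSol n F ((-1 : ℂ) ^ n * (starRingEnd ℂ) lam) Y ∧
      (∀ j : Fin n, (j : ℕ) < n - k → Y 0 j = 0) ∧
      (∀ j : Fin n, (j : ℕ) < k → Y 1 j = 0) ∧
      (∃ x ∈ Set.Icc (0:ℝ) 1, Y x ≠ 0) := by
  obtain ⟨Y, hY, hY0, hY1, x, hx, hYx⟩ := h
  have hFi := hF.1.1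
  have hFs : ∀ i j, IntegrableOn (fun x => FStar n F x i j) (Set.Icc (0:ℝ) 1) := fun i j =>
    (hFi _ _).const_mul _
  have m0 : (0:ℝ) ∈ Set.Icc (0:ℝ) 1 := by simp
  have m1 : (1:ℝ) ∈ Set.Icc (0:ℝ) 1 := by simp
  obtain ⟨S, hS0, hS⟩ := exists_resolvent hFs ((-1) ^ n * lam)
  obtain ⟨R, hR0, hR⟩ := exists_resolvent hFi lam
  -- a vector annihilated by the bracket form from either side vanishes
  have nondegR : ∀ y : Fin n → ℂ,
      (∀ z : Fin n → ℂ, ∑ j : Fin n, (-1 : ℂ) ^ (j : ℕ) * z j * y j.rev = 0) → y = 0 := by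
    intro y hy
    ext i
    simpa [Pi.single_apply] using hy (Pi.single i.rev 1)
  have nondegL : ∀ z : Fin n → ℂ,
      (∀ y : Fin n → ℂ, ∑ j : Fin n, (-1 : ℂ) ^ (j : ℕ) * z j * y j.rev = 0) → z = 0 := by
    intro z hz
    ext i
    simpa [Pi.single_apply, Fin.rev_inj] using hz (Pi.single i.rev 1)
  have hSsurj : ∀ x ∈ Set.Icc (0:ℝ) 1, Function.Surjective (S x) := by
    intro x hx
    rw [← LinearMap.injective_iff_surjective, injective_iff_map_eq_zero]
    intro c hc
    refine nondegL c fun d => ?_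
    -- if `S x c = 0`, the bracket with `R · d` vanishes at `x`, hence also at `0`, where it is that
    -- of `c` and `d`
    have := bracket_eq hFi (hS c) (hR d) hx
    simpa [bracket, hc, hS0, hR0] using this.symm
  -- the bracket of `Y` with every solution of the adjoint system is independent of the point
  have hbr : ∀ c, bracket n (fun x => S x c) Y x = bracket n (fun x => S x c) Y 1 := fun c => by
    rw [bracket_eq hFi (hS c) hY hx, bracket_eq hFi (hS c) hY m1]
  have hY1ne : Y 1 ≠ 0 := by
    intro h1
    refine hYx (nondegR _ fun z => ?_)
    obtain ⟨c, rfl⟩ := hSsurj x hx z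
    simpa [bracket, h1] using hbr c
  -- `e` identifies `ℂᵏ` with the vectors whose first `n - k` coordinates vanish
  let s : Fin k → Fin n := fun i => (Fin.castLE hkn i).rev
  have hs : Function.Injective s := fun i j hij => by simpa [s] using hij
  let e : (Fin k → ℂ) →ₗ[ℂ] (Fin n → ℂ) := Function.ExtendByZero.linearMap ℂ s
  have he0 : ∀ c, ∀ j : Fin n, (j : ℕ) < n - k → e c j = 0 := by
    intro c j hj
    refine Function.extend_apply' _ _ _ ?_
    rintro ⟨i, rfl⟩
    have := i.isLt
    simp only [s, Fin.val_rev, Fin.val_castLE] at hj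
    omega
  let L : (Fin k → ℂ) →ₗ[ℂ] (Fin k → ℂ) :=
    (LinearMap.funLeft ℂ ℂ (Fin.castLE hkn)) ∘ₗ S 1 ∘ₗ e
  have hLninj : ¬ Function.Injective L := by
    intro hinj
    have hsurj := LinearMap.injective_iff_surjective.1 hinj
    refine hY1ne (nondegR _ fun z => ?_)
    obtain ⟨c, hc⟩ := hsurj (fun i => z (Fin.castLE hkn i))
    -- at `0` each summand has a vanishing factor, from `e c` or from `Y 0`
    have h2 : bracket n (fun x => S x (e c)) Y 1 = 0 := by
      rw [bracket_eq hFi (hS (e c)) hY m1]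
      refine Finset.sum_eq_zero fun j _ => ?_
      have hj := j.isLt
      simp only [hS0, LinearMap.id_apply]
      by_cases hjk : (j : ℕ) < n - k
      · rw [he0 c j hjk]; simp
      · rw [hY0 j.rev (by rw [Fin.val_rev]; omega)]; simp
    rw [← h2]
    refine Finset.sum_congr rfl fun j _ => ?_
    have hj := j.isLt
    by_cases hjk : (j : ℕ) < k
    · have : L c ⟨j, hjk⟩ = z j := by rw [hc]; rfl
      rw [← this]
      rfl
    · rw [hY1 j.rev (by rw [Fin.val_rev]; omega)]; simp
  rw [injective_iff_map_eq_zero] at hLninj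
  push Not at hLninj
  obtain ⟨c, hc, hc0⟩ := hLninj
  have hec : e c ≠ 0 := by
    intro h0
    refine hc0 (funext fun i => ?_)
    have := congrFun h0 (s i)
    rwa [show e c (s i) = c i from hs.extend_apply _ _ _] at this
  refine ⟨_, IsSolStar.conj hF (hS (e c)), fun j hj => ?_, fun j hj => ?_, 0, m0, fun h0 => hec ?_⟩
  · simp [hS0, he0 c j hj]
  · have : S 1 (e c) j = 0 := congrFun hc ⟨j, hj⟩
    simp [this]
  · ext j
    simpa [hS0] using congrFun h0 j

/-- Self-adjointness relation (Section 3), eigenvalue part: for `F ∈ 𝔉_n⁺`, `λ` is an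
eigenvalue of `L_k` iff `(-1)^n conj(λ)` is an eigenvalue of `L_{n-k}`. -/
theorem statement5 (n : ℕ) (hn : 2 ≤ n) (F : ℝ → Matrix (Fin n) (Fin n) ℂ)
    (hF : IsFrakFPlus n F) (k : ℕ) (hk1 : 1 ≤ k) (hkn : k ≤ n - 1) (lam : ℂ) :
    (∃ Y : ℝ → Fin n → ℂ, IsSol n F lam Y ∧
      (∀ j : Fin n, (j : ℕ) < k → Y 0 j = 0) ∧
      (∀ j : Fin n, (j : ℕ) < n - k → Y 1 j = 0) ∧
      (∃ x ∈ Set.Icc (0:ℝ) 1, Y x ≠ 0)) ↔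
    (∃ Y : ℝ → Fin n → ℂ, IsSol n F ((-1 : ℂ) ^ n * (starRingEnd ℂ) lam) Y ∧
      (∀ j : Fin n, (j : ℕ) < n - k → Y 0 j = 0) ∧
      (∀ j : Fin n, (j : ℕ) < k → Y 1 j = 0) ∧
      (∃ x ∈ Set.Icc (0:ℝ) 1, Y x ≠ 0)) := by
  have hk : k ≤ n := by omega
  refine ⟨exists_sol_ne_zero hF hk, fun h => ?_⟩
  have h' := exists_sol_ne_zero (k := n - k) hF (by omega)
    (lam := (-1 : ℂ) ^ n * (starRingEnd ℂ) lam) (by rwa [show n - (n - k) = k by omega])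
  rw [show n - (n - k) = k by omega] at h'
  have hl : (-1 : ℂ) ^ n * (starRingEnd ℂ) ((-1 : ℂ) ^ n * (starRingEnd ℂ) lam) = lam := by
    have : (-1 : ℂ) ^ n * (-1 : ℂ) ^ n = 1 := by
      rw [← mul_pow]; simp
    simp only [map_mul, map_pow, map_neg, map_one, Complex.conj_conj]
    rw [← mul_assoc, this, one_mul]
  rwa [hl] at h'
end

section
/- Let σ₀, σ₁, σ₂ : ℝ → ℂ be continuously differentiable, σ₃ : ℝ → ℂ twice continuously differentiable, and let y : ℝ → ℂ be five times continuously differentiable. Let F be the 5×5 matrix function with rows (0,1,0,0,0), (0,0,1,0,0), (0, −σ₃, 0, 1, 0), (σ₀+σ₁, σ₂, −σ₃, 0, 1), (0, −(σ₀−σ₁), 0, 0, 0), and define the quasi-derivatives y^{[0]} := y, y^{[k]} := (y^{[k−1]})' − Σ_{j=1}^{k} f_{k,j}·y^{[j−1]} for k = 1,…,5. Then y^{[5]} = y⁽⁵⁾ + (σ₃·y')'' + (σ₃·y'')' − (σ₂·y')' − (σ₁·y)' − σ₁·y' − σ₀'·y for all x. (Regularization identity for the fifth-order differential expression via the associated matrix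 of Section 6, case n = 5.) -/
/-! Every summand of `y⁽⁴⁾` is continuously differentiable, so the outer derivative splits by
linearity, and the only product that has to be expanded is
`(σ₀ y)' = σ₀' y + σ₀ y'`: its second part cancels against the `σ₀ y'` of `y⁽⁵⁾`. -/

/-- Regularization identity for the fifth-order differential expression (Section 6, `n = 5`).
For the associated matrix `F` with rows `(0,1,0,0,0)`, `(0,0,1,0,0)`, `(0, −σ₃, 0, 1, 0)`,
`(σ₀+σ₁, σ₂, −σ₃, 0, 1)`, `(0, −(σ₀−σ₁), 0, 0, 0)`, the quasi-derivatives are `y⁽¹⁾ = y'`,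
`y⁽²⁾ = y''`, `y⁽³⁾ = y''' + σ₃ y'`,
`y⁽⁴⁾ = (y⁽³⁾)' − (σ₀+σ₁) y − σ₂ y' + σ₃ y''`, `y⁽⁵⁾ = (y⁽⁴⁾)' + (σ₀−σ₁) y'`, and
`y⁽⁵⁾ = y⁽⁵ᵈ⁾ + (σ₃ y')'' + (σ₃ y'')' − (σ₂ y')' − (σ₁ y)' − σ₁ y' − σ₀' y`. -/
theorem statement16 (σ₀ σ₁ σ₂ σ₃ y : ℝ → ℂ)
    (h0 : ContDiff ℝ 1 σ₀) (h1 : ContDiff ℝ 1 σ₁) (h2 : ContDiff ℝ 1 σ₂)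
    (h3 : ContDiff ℝ 2 σ₃) (hy : ContDiff ℝ 5 y) :
    ∀ x : ℝ,
      deriv (fun t =>
          deriv (fun s => iteratedDeriv 3 y s + σ₃ s * deriv y s) t
            - (σ₀ t + σ₁ t) * y t - σ₂ t * deriv y t + σ₃ t * iteratedDeriv 2 y t) x
          + (σ₀ x - σ₁ x) * deriv y x
        = iteratedDeriv 5 y x
          + iteratedDeriv 2 (fun t => σ₃ t * deriv y t) x
          + deriv (fun t => σ₃ t * iteratedDeriv 2 y t) x
          - deriv (fun t => σ₂ t * deriv y t) x
          - deriv (fun t => σ₁ t * y t) x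
          - σ₁ x * deriv y x - deriv σ₀ x * y x := by
  intro x
  have one_ne : (1 : WithTop ℕ∞) ≠ 0 := one_ne_zero
  have hy1 : ContDiff ℝ 2 (deriv y) := by
    have h : ContDiff ℝ (2 + 1) y := hy.of_le (by norm_num)
    exact (contDiff_succ_iff_deriv.1 h).2.2
  have hyk : ∀ k : ℕ, k < 5 → Differentiable ℝ (iteratedDeriv k y) := fun k hk =>
    hy.differentiable_iteratedDeriv k (by exact_mod_cast hk)
  have hp : ContDiff ℝ 2 (fun t => σ₃ t * deriv y t) := h3.mul hy1
  have dp : Differentiable ℝ (fun t => σ₃ t * deriv y t) := hp.differentiable two_ne_zero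
  have dp1 : Differentiable ℝ (deriv fun t => σ₃ t * deriv y t) := by
    simpa using hp.differentiable_iteratedDeriv 1 (by norm_num)
  have dy : Differentiable ℝ y := hy.differentiable (by norm_num)
  have dy1 : Differentiable ℝ (deriv y) := hy1.differentiable two_ne_zero
  have d0 := h0.differentiable one_ne
  have d1 := h1.differentiable one_ne
  have d2 := h2.differentiable one_ne
  have d3 := h3.differentiable two_ne_zero
  have e : (fun t =>
          deriv (fun s => iteratedDeriv 3 y s + σ₃ s * deriv y s) t
            - (σ₀ t + σ₁ t) * y t - σ₂ t * deriv y t + σ₃ t * iteratedDeriv 2 y t)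
      = fun t => iteratedDeriv 4 y t + deriv (fun s => σ₃ s * deriv y s) t
            - σ₀ t * y t - σ₁ t * y t - σ₂ t * deriv y t + σ₃ t * iteratedDeriv 2 y t := by
    funext t
    rw [deriv_fun_add (hyk 3 (by norm_num) t) (dp t), iteratedDeriv_succ (n := 3)]
    ring
  have k4 := (hyk 4 (by norm_num) x).hasDerivAt
  rw [← iteratedDeriv_succ] at k4
  have kp := (dp1 x).hasDerivAt
  have k0 := (d0 x).hasDerivAt.fun_mul (dy x).hasDerivAt
  have k1 := ((d1.fun_mul dy) x).hasDerivAt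
  have k2 := ((d2.fun_mul dy1) x).hasDerivAt
  have k3 := ((d3.fun_mul (hyk 2 (by norm_num))) x).hasDerivAt
  rw [e, (((((k4.fun_add kp).fun_sub k0).fun_sub k1).fun_sub k2).fun_add k3).deriv,
    iteratedDeriv_succ (n := 1) (f := fun t => σ₃ t * deriv y t), iteratedDeriv_one]
  ring
end
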